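/- arXiv:0910.1897 — 2 statements merged into one kernel-verified Lean document; each statement's English description precedes it below -/
import Mathlib

section
/- Let n ≥ 2 and let ℱ be a foliation of dimension one on a connected n-manifold M. Then the set of leaves of ℱ has cardinality exactly 𝔠 = 2^ℵ₀, the cardinality of the continuum. -/
noncomputable section

open Set Topology Filter

universe u

/-! ### The long ray and the long line -/

/-- The first uncountable ordinal `ω₁`, viewed as the linearly ordered set of all
countable ordinals. -/
def Omega1 : Type 1 := {o : Ordinal.{0} // o < (Cardinal.aleph 1).ord}

instance : LinearOrder Omega1 :=
  inferInstanceAs (LinearOrder {o : Ordinal.{0} // o < (Cardinal.aleph 1).ord})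

/-- `ω₁` carries the order topology. -/
instance : TopologicalSpace Omega1 := Preorder.topology Omega1

instance : OrderTopology Omega1 := ⟨rfl⟩

/-- The underlying countable ordinal of an element of `ω₁`. -/
def Omega1.toOrdinal : Omega1 → Ordinal.{0} := Subtype.val

/-- The closed long ray `𝕃≥0`: the set `ω₁ × [0,1)` with the lexicographic order and the
order topology. -/
def ClosedLongRay : Type 1 := Omega1 ×ₗ (Set.Ico (0:ℝ) 1)

instance : LinearOrder ClosedLongRay :=
  inferInstanceAs (LinearOrder (Omega1 ×ₗ (Set.Ico (0:ℝ) 1)))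

instance : TopologicalSpace ClosedLongRay := Preorder.topology ClosedLongRay

instance : OrderTopology ClosedLongRay := ⟨rfl⟩

/-- The long ray `𝕃₊`: the closed long ray with its least element removed, with the
subspace topology (an element is non-minimal iff something is below it). -/
def LongRay : Type 1 := {x : ClosedLongRay // ∃ y, y < x}

instance : LinearOrder LongRay :=
  inferInstanceAs (LinearOrder {x : ClosedLongRay // ∃ y, y < x})

instance : TopologicalSpace LongRay :=
  inferInstanceAs (TopologicalSpace {x : ClosedLongRay // ∃ y, y < x})

/-- The inclusion of the long ray into the closed long ray. -/
def LongRay.toCLR : LongRay → ClosedLongRay := Subtype.val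

/-- The long line `𝕃`: an order-reversed copy of `𝕃₊` placed below the closed long ray
`𝕃≥0`, with the order topology. -/
def LongLine : Type 1 := (OrderDual LongRay) ⊕ₗ ClosedLongRay

instance : LinearOrder LongLine :=
  inferInstanceAs (LinearOrder ((OrderDual LongRay) ⊕ₗ ClosedLongRay))

instance : TopologicalSpace LongLine := Preorder.topology LongLine

instance : OrderTopology LongLine := ⟨rfl⟩

/-- The identification of `𝕃₊` with the set of positive elements of `𝕃`. -/
def LongRay.inL (a : LongRay) : LongLine := toLex (Sum.inr a.toCLR)

/-- The natural order-reversing involution `x ↦ -x` of the long line, exchanging the two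
copies of `𝕃₊` and fixing the least element `0` of `𝕃≥0`. -/
noncomputable def LongLine.neg (x : LongLine) : LongLine :=
  match ofLex x with
  | Sum.inl a => toLex (Sum.inr (OrderDual.ofDual a).toCLR)
  | Sum.inr b =>
      @dite _ (∃ y, y < b) (Classical.dec _)
        (fun h => toLex (Sum.inl (OrderDual.toDual (⟨b, h⟩ : LongRay))))
        (fun _ => x)

/-- A subset of the long ray is a *club* if it is closed (in the topology of `𝕃₊`) and
unbounded (i.e. cofinal). -/
def ClubInLongRay (C : Set LongRay) : Prop :=
  IsClosed C ∧ ∀ β : LongRay, ∃ α ∈ C, β ≤ α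

/-- A topological space `X` is *squat* if every continuous map `𝕃₊ → X` is eventually
constant. -/
def Squat (X : Type*) [TopologicalSpace X] : Prop :=
  ∀ f : LongRay → X, Continuous f → ∃ (β : LongRay) (x : X), ∀ α, β ≤ α → f α = x

/-! ### Manifolds and foliations -/

/-- A (topological) `n`-manifold: a nonempty Hausdorff space in which every point has an
open neighbourhood homeomorphic to `ℝⁿ`. -/
def IsTopManifold (M : Type u) [TopologicalSpace M] (n : ℕ) : Prop :=
  Nonempty M ∧ T2Space M ∧
    ∀ x : M, ∃ U : Set M, x ∈ U ∧ IsOpen U ∧ Nonempty (U ≃ₜ (Fin n → ℝ))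

/-- A foliation of dimension `p` and codimension `q` on a space `M`: a family of charts
`φᵢ : Uᵢ ≃ₜ ℝᵖ × ℝ^q` on open sets covering `M` such that all coordinate transformations
have the form `(x, y) ↦ (g (x, y), h y)`, i.e. the last `q` coordinates of the image
depend only on the last `q` coordinates of the argument. -/
structure Foliation (M : Type u) [TopologicalSpace M] (p q : ℕ) where
  /-- index type of the atlas -/
  ι : Type u
  /-- chart domains -/
  U : ι → Set M
  /-- the charts -/
  chart : (i : ι) → ((U i) ≃ₜ ((Fin p → ℝ) × (Fin q → ℝ)))
  isOpen : ∀ i, IsOpen (U i)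
  covers : ∀ x : M, ∃ i, x ∈ U i
  compat : ∀ i j (x y : M) (hxi : x ∈ U i) (hxj : x ∈ U j) (hyi : y ∈ U i) (hyj : y ∈ U j),
    (chart i ⟨x, hxi⟩).2 = (chart i ⟨y, hyi⟩).2 → (chart j ⟨x, hxj⟩).2 = (chart j ⟨y, hyj⟩).2

namespace Foliation

variable {M : Type u} [TopologicalSpace M] {p q : ℕ}

/-- The set `φᵢ⁻¹ (ℝᵖ × {y})` in the chart domain `Uᵢ`. -/
def plaqueFibre (F : Foliation M p q) (i : F.ι) (y : Fin q → ℝ) : Set M :=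
  {w : M | ∃ hw : w ∈ F.U i, (F.chart i ⟨w, hw⟩).2 = y}

/-- A *plaque* of the foliation: a connected component of a set of the form
`φᵢ⁻¹ (ℝᵖ × {y})`. -/
def IsPlaque (F : Foliation M p q) (P : Set M) : Prop :=
  ∃ (i : F.ι) (y : Fin q → ℝ) (z : M), z ∈ F.plaqueFibre i y ∧
    P = connectedComponentIn (F.plaqueFibre i y) z

/-- Two points lie in a common plaque. -/
def samePlaque (F : Foliation M p q) (x y : M) : Prop :=
  ∃ P, F.IsPlaque P ∧ x ∈ P ∧ y ∈ P

/-- The leaf relation: the smallest equivalence relation relating any two points that lie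
in a common plaque. -/
def leafRel (F : Foliation M p q) : M → M → Prop := Relation.EqvGen F.samePlaque

/-- The *leaves* of the foliation: equivalence classes of the leaf relation. -/
def IsLeaf (F : Foliation M p q) (L : Set M) : Prop :=
  ∃ x : M, L = {y | F.leafRel x y}

/-- The *leaf topology* on a leaf (or any subset) `L`: the topology generated by the
plaques contained in `L`. -/
def leafTopology (F : Foliation M p q) (L : Set M) : TopologicalSpace L :=
  TopologicalSpace.generateFrom
    {s : Set L | ∃ P, F.IsPlaque P ∧ P ⊆ L ∧ s = Subtype.val ⁻¹' P}

/-- A leaf is *long* if it is not metrisable in its leaf topology. -/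
def IsLongLeaf (F : Foliation M p q) (L : Set M) : Prop :=
  F.IsLeaf L ∧ ¬ @TopologicalSpace.MetrizableSpace L (F.leafTopology L)

/-- A subset of `M` is *saturated* by the foliation if it is a union of leaves. -/
def Saturated (F : Foliation M p q) (S : Set M) : Prop :=
  ∀ x ∈ S, ∀ y, F.leafRel x y → y ∈ S

end Foliation

/-! Upper bound: in a connected Hausdorff manifold, a set closed under limits of sequences and under
all chart parametrisations is clopen, and such a set is generated from one point by operations on
sequences, indexed by at most `𝔠` parameters. So the manifold has at most `𝔠` points.

Lower bound: a transversal has `𝔠` points, so it suffices that a leaf meets it in a countable set.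
With its leaf topology a leaf is a connected Hausdorff one-manifold, but it need not be second
countable: it may be a long line. Removing a point leaves at most two components, each with an end
at the removed point, and running away from the end orders the component linearly. If a half-line of
such a component met the transversal in uncountably many points, then every sequence in it would be
bounded, hence an increasing sequence would converge. An increasing sequence whose crossings
approach two condensation points of the crossed positions alternately would then have a limit that
sits at two positions of the transversal at once.
-/

universe v

/-! ### Countability of relations over ordered spaces -/

section Condensation

variable {Y : Type*} [TopologicalSpace Y]

/-- The condensation points of a set: the points all of whose neighbourhoods meet it in an
uncountable set. -/
def condensationPoints (A : Set Y) : Set Y := {y | ∀ W ∈ 𝓝 y, ¬ (A ∩ W).Countable}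

variable [SecondCountableTopology Y] {A : Set Y}

theorem countable_sdiff_condensationPoints : (A \ condensationPoints A).Countable := by
  have hnhds : ∀ y ∈ A \ condensationPoints A, ∃ W ∈ 𝓝 y, (A ∩ W).Countable := fun y hy ↦ by
    simpa [condensationPoints] using hy.2
  choose! W hW hAW using hnhds
  obtain ⟨t, htA, htc, ht⟩ := TopologicalSpace.countable_cover_nhdsWithin
    fun y hy ↦ mem_nhdsWithin_of_mem_nhds (hW y hy)
  refine (htc.biUnion fun y hy ↦ hAW y (htA hy)).mono fun y hy ↦ ?_
  rw [← inter_iUnion₂]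
  exact ⟨hy.1, ht hy⟩

theorem nontrivial_condensationPoints (hA : ¬ A.Countable) : (condensationPoints A).Nontrivial := by
  by_contra h
  refine hA (((countable_sdiff_condensationPoints (A := A)).union
    (not_nontrivial_iff.1 h).countable).mono ?_)
  rw [sdiff_union_self]
  exact subset_union_left

end Condensation

theorem exists_strictMono_forall_mem_of_not_bddAbove {X : Type*} [LinearOrder X] [Nonempty X]
    {S : ℕ → Set X} (hS : ∀ n, ¬ BddAbove (S n)) : ∃ s : ℕ → X, StrictMono s ∧ ∀ n, s n ∈ S n := by
  simp only [not_bddAbove_iff] at hS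
  choose next hmem hlt using hS
  let s : ℕ → X := fun n ↦ n.rec (next 0 (Classical.arbitrary X)) fun k x ↦ next (k + 1) x
  refine ⟨s, strictMono_nat_of_lt_succ fun n ↦ hlt _ _, fun n ↦ ?_⟩
  cases n <;> exact hmem _ _

section OrderedCountability

variable {X Y : Type*} [LinearOrder X] [TopologicalSpace X] [OrderClosedTopology X]
  [LocallyConnectedSpace X] {R : SetRel X Y}

theorem eventually_uIcc_subset_of_mem_nhds {x : X} {N : Set X} (hN : N ∈ 𝓝 x) :
    ∀ᶠ y in 𝓝 x, uIcc x y ⊆ N := by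
  filter_upwards [connectedComponentIn_mem_nhds hN] with y hy
  exact (isPreconnected_connectedComponentIn.ordConnected.uIcc_subset
    (mem_connectedComponentIn (mem_of_mem_nhds hN)) hy).trans (connectedComponentIn_subset N x)

variable [PreconnectedSpace X]

theorem countable_image_uIcc (hR : ∀ x, ∃ N ∈ 𝓝 x, (R.image N).Countable) (x y : X) :
    (R.image (uIcc x y)).Countable := by
  have : Std.Symm fun a b : X ↦ (R.image (uIcc a b)).Countable :=
    ⟨fun a b h ↦ by rwa [uIcc_comm]⟩
  refine PreconnectedSpace.induction₂ (fun a b ↦ (R.image (uIcc a b)).Countable) (fun a ↦ ?_)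
    ⟨fun a b c hab hbc ↦ ?_⟩ x y
  · obtain ⟨N, hN, hRN⟩ := hR a
    filter_upwards [eventually_uIcc_subset_of_mem_nhds hN] with b hb
    exact hRN.mono (SetRel.image_mono hb)
  · have hsub := SetRel.image_mono (R := R) (uIcc_subset_uIcc_union_uIcc (a := a) (b := b) (c := c))
    exact (hab.union hbc).mono (hsub.trans_eq (SetRel.image_union ..))

theorem exists_tendsto_of_strictMono_of_bddAbove {s : ℕ → X} (hs : StrictMono s)
    (hbdd : BddAbove (range s)) : ∃ w, Tendsto s atTop (𝓝 w) := by
  obtain ⟨u, hu⟩ := hbdd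
  have hopen : IsOpen (⋃ k, Iio (s k)) := isOpen_iUnion fun k ↦ isOpen_Iio
  obtain ⟨w, hwcl, hw⟩ : ∃ w ∈ closure (⋃ k, Iio (s k)), w ∉ ⋃ k, Iio (s k) := by
    by_contra! hclosed
    have huniv := IsClopen.eq_univ ⟨isClosed_of_closure_subset hclosed, hopen⟩
      ⟨s 0, mem_iUnion.2 ⟨1, hs zero_lt_one⟩⟩
    obtain ⟨k, hk⟩ := mem_iUnion.1 (huniv ▸ mem_univ u)
    exact (hu ⟨k, rfl⟩).not_gt hk
  simp only [mem_iUnion, mem_Iio, not_exists, not_lt] at hw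
  refine ⟨w, fun N hN ↦ mem_map.2 ?_⟩
  obtain ⟨y, hyV, hyN⟩ := (mem_closure_iff_frequently.1 hwcl).and_eventually
    (eventually_uIcc_subset_of_mem_nhds hN) |>.exists
  obtain ⟨k, hk⟩ := mem_iUnion.1 hyV
  filter_upwards [eventually_ge_atTop k] with m hm
  exact hyN (mem_uIcc_of_ge (hk.le.trans (hs.monotone hm)) (hw m))

theorem bddAbove_range_of_not_countable_image_Ici
    (hR : ∀ x, ∃ N ∈ 𝓝 x, (R.image N).Countable) {x₀ : X} (hx₀ : ¬ (R.image (Ici x₀)).Countable)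
    (s : ℕ → X) : BddAbove (range s) := by
  contrapose! hx₀
  have hcover : Ici x₀ ⊆ ⋃ k, uIcc x₀ (s k) := fun x hx ↦ by
    obtain ⟨_, ⟨k, rfl⟩, hk⟩ := not_bddAbove_iff.1 hx₀ x
    exact mem_iUnion.2 ⟨k, mem_uIcc_of_le hx hk.le⟩
  refine (countable_iUnion fun k ↦ countable_image_uIcc hR x₀ (s k)).mono ?_
  exact (SetRel.image_mono hcover).trans_eq (SetRel.image_iUnion ..)

theorem not_bddAbove_preimage_of_mem_condensationPoints
    (hR : ∀ x, ∃ N ∈ 𝓝 x, (R.image N).Countable) [TopologicalSpace Y] {x₀ : X} {y : Y}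
    (hy : y ∈ condensationPoints (R.image (Ici x₀))) {W : Set Y} (hW : W ∈ 𝓝 y) :
    ¬ BddAbove (R.preimage W) := by
  rintro ⟨u, hu⟩
  refine hy W hW ((countable_image_uIcc hR x₀ u).mono ?_)
  rintro z ⟨⟨x, hx, hxz⟩, hzW⟩
  exact ⟨x, mem_uIcc_of_le hx (hu ⟨z, hzW, hxz⟩), hxz⟩

theorem exists_mem_mem_of_not_bddAbove_preimage [Nonempty X] [TopologicalSpace Y]
    [FirstCountableTopology Y] (hclosed : IsClosed R) (hbdd : ∀ s : ℕ → X, BddAbove (range s))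
    {y₁ y₂ : Y} (hy₁ : ∀ W ∈ 𝓝 y₁, ¬ BddAbove (R.preimage W))
    (hy₂ : ∀ W ∈ 𝓝 y₂, ¬ BddAbove (R.preimage W)) : ∃ x, (x, y₁) ∈ R ∧ (x, y₂) ∈ R := by
  obtain ⟨B₁, hB₁⟩ := (𝓝 y₁).exists_antitone_basis
  obtain ⟨B₂, hB₂⟩ := (𝓝 y₂).exists_antitone_basis
  obtain ⟨s, hs, hsB⟩ := exists_strictMono_forall_mem_of_not_bddAbove
    (S := fun n ↦ R.preimage (if Even n then B₁ n else B₂ n)) fun n ↦ by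
      split_ifs
      exacts [hy₁ _ (hB₁.mem n), hy₂ _ (hB₂.mem n)]
  choose z hzB hsz using hsB
  obtain ⟨w, hw⟩ := exists_tendsto_of_strictMono_of_bddAbove hs (hbdd s)
  have heven : StrictMono fun k ↦ 2 * k := fun _ _ h ↦ by dsimp only; omega
  have hodd : StrictMono fun k ↦ 2 * k + 1 := fun _ _ h ↦ by dsimp only; omega
  have hz₁ : Tendsto (fun k ↦ z (2 * k)) atTop (𝓝 y₁) :=
    (hB₁.comp_strictMono heven).tendsto fun k ↦ by simpa using hzB (2 * k)
  have hz₂ : Tendsto (fun k ↦ z (2 * k + 1)) atTop (𝓝 y₂) :=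
    (hB₂.comp_strictMono hodd).tendsto fun k ↦ by simpa using hzB (2 * k + 1)
  exact ⟨w,
    hclosed.mem_of_tendsto ((hw.comp heven.tendsto_atTop).prodMk_nhds hz₁)
      (.of_forall fun k ↦ hsz _),
    hclosed.mem_of_tendsto ((hw.comp hodd.tendsto_atTop).prodMk_nhds hz₂)
      (.of_forall fun k ↦ hsz _)⟩

theorem countable_image_Ici [TopologicalSpace Y] [SecondCountableTopology Y] (hclosed : IsClosed R)
    (hsub : ∀ x, (R.image {x}).Subsingleton) (hR : ∀ x, ∃ N ∈ 𝓝 x, (R.image N).Countable) (x₀ : X) :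
    (R.image (Ici x₀)).Countable := by
  by_contra hA
  have : Nonempty X := ⟨x₀⟩
  obtain ⟨y₁, hy₁, y₂, hy₂, hne⟩ := nontrivial_condensationPoints hA
  obtain ⟨x, hx₁, hx₂⟩ := exists_mem_mem_of_not_bddAbove_preimage hclosed
    (bddAbove_range_of_not_countable_image_Ici hR hA)
    (fun _ ↦ not_bddAbove_preimage_of_mem_condensationPoints hR hy₁)
    (fun _ ↦ not_bddAbove_preimage_of_mem_condensationPoints hR hy₂)
  exact hne (hsub x ⟨x, rfl, hx₁⟩ ⟨x, rfl, hx₂⟩)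

theorem countable_cod_of_isClosed [TopologicalSpace Y] [SecondCountableTopology Y]
    (hclosed : IsClosed R) (hsub : ∀ x, (R.image {x}).Subsingleton)
    (hR : ∀ x, ∃ N ∈ 𝓝 x, (R.image N).Countable) :
    R.cod.Countable := by
  rcases isEmpty_or_nonempty X with hX | ⟨⟨x₀⟩⟩
  · simp [← SetRel.image_univ_right, eq_empty_of_isEmpty]
  have : LocallyConnectedSpace Xᵒᵈ := ‹LocallyConnectedSpace X›
  have : PreconnectedSpace Xᵒᵈ := ‹PreconnectedSpace X›
  have hIic : (R.image (Iic x₀)).Countable :=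
    countable_image_Ici (X := Xᵒᵈ) hclosed hsub hR (OrderDual.toDual x₀)
  rw [← SetRel.image_univ_right, ← Iic_union_Ici (a := x₀), SetRel.image_union]
  exact hIic.union (countable_image_Ici hclosed hsub hR x₀)

end OrderedCountability

/-! ### The linear order of a one-manifold with an end -/

theorem orderClosedTopology_of_isOpen {X : Type*} [TopologicalSpace X] [PreconnectedSpace X]
    [LinearOrder X] (hIio : ∀ a : X, IsOpen (Iio a)) (hIoi : ∀ a : X, IsOpen (Ioi a)) :
    OrderClosedTopology X where
  isClosed_le' := by
    have hbetween : ∀ a b : X, a < b → ∃ c, a < c ∧ c < b := fun a b hab ↦ by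
      by_contra! h
      obtain ⟨c, -, hc⟩ := isPreconnected_univ _ _ (hIio b) (hIoi a)
        (fun c _ ↦ (lt_or_ge c b).imp_right fun hbc ↦ hab.trans_le hbc) ⟨a, trivial, hab⟩
        ⟨b, trivial, hab⟩
      exact (h c hc.2).not_gt hc.1
    have hcompl : {p : X × X | p.1 ≤ p.2}ᶜ = ⋃ c, Ioi c ×ˢ Iio c := by
      ext ⟨a, b⟩
      simp only [mem_compl_iff, mem_ofPred_eq, not_le, mem_iUnion, mem_prod, mem_Ioi, mem_Iio]
      exact ⟨fun h ↦ (hbetween b a h).imp fun _ ↦ And.symm, fun ⟨c, hca, hcb⟩ ↦ hcb.trans hca⟩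
    rw [← isOpen_compl_iff, hcompl]
    exact isOpen_iUnion fun c ↦ (hIoi c).prod (hIio c)

theorem exists_isOpenEmbedding_apply_zero_eq {E X : Type*} [NormedAddCommGroup E]
    [InnerProductSpace ℝ E] [TopologicalSpace X] [ChartedSpace E X] (x : X) :
    ∃ c : E → X, IsOpenEmbedding c ∧ c 0 = x := by
  obtain ⟨r, hr, hball⟩ := Metric.isOpen_iff.1 (chartAt E x).open_target _ (mem_chart_target E x)
  let c := (OpenPartialHomeomorph.univBall (chartAt E x x) r).trans (chartAt E x).symm
  have hsource : c.source = univ := by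
    rw [OpenPartialHomeomorph.trans_source, OpenPartialHomeomorph.univBall_source, univ_inter,
      eq_univ_iff_forall]
    intro v
    apply hball
    rw [← OpenPartialHomeomorph.univBall_target _ hr]
    refine OpenPartialHomeomorph.map_source _ ?_
    rw [OpenPartialHomeomorph.univBall_source]
    trivial
  refine ⟨c, c.isOpenEmbedding hsource, ?_⟩
  simp [c]

theorem insert_union_image_Iio {α X : Type*} [LinearOrder α] {c : α → X} {s t : α} {A : Set X}
    (hst : s ≤ t) (hA : c '' Iio s ⊆ A) :
    insert (c t) (A ∪ c '' Iio t) = insert (c s) A ∪ c '' Icc s t := calc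
  _ = A ∪ c '' Iic t := by rw [← union_insert, ← image_insert_eq, Iio_insert]
  _ = A ∪ c '' Icc s t := by
    rw [← Iio_union_Icc_eq_Iic hst, image_union, ← union_assoc, union_eq_left.2 hA]
  _ = insert (c s) A ∪ c '' Icc s t := by
    rw [insert_union, insert_eq_of_mem]
    exact Or.inr ⟨s, left_mem_Icc.2 hst, rfl⟩

theorem insert_sdiff_image_Icc {α X : Type*} [LinearOrder α] {c : α → X} {s t : α} {A : Set X}
    (hc : c.Injective) (hst : s ≤ t) (hIio : Disjoint (c '' Iio s) A)
    (hIoi : c '' Ioi s ⊆ A) :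
    insert (c t) (A \ c '' Icc s t) = insert (c s) A \ c '' Iio t := by
  have ht : c t ∈ insert (c s) A \ c '' Iio t := by
    refine ⟨?_, hc.mem_set_image.not.2 self_notMem_Iio⟩
    rcases hst.eq_or_lt with rfl | hlt
    exacts [Or.inl rfl, Or.inr (hIoi ⟨t, hlt, rfl⟩)]
  calc
  _ = insert (c t) (A \ c '' Iic t) := by
    rw [← Iio_union_Icc_eq_Iic hst, image_union, ← Set.sdiff_sdiff, hIio.symm.sdiff_eq_left]
  _ = insert (c t) (insert (c s) A \ c '' Iic t) := by
    rw [insert_sdiff_of_mem A (mem_image_of_mem c (mem_Iic.2 hst))]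
  _ = insert (c t) ((insert (c s) A \ c '' Iio t) \ {c t}) := by
    rw [← Iio_insert, image_insert_eq, insert_eq (c t) (c '' Iio t), union_comm,
      Set.sdiff_sdiff]
  _ = insert (c s) A \ c '' Iio t := by rw [insert_sdiff_singleton, insert_eq_of_mem ht]

section EndOrder

variable {X : Type*} [TopologicalSpace X]

/-- For an end of a space, given by a filter `ℰ`, the point `y` lies strictly between the end and
the point `z`. When `ℰ` is an end of a connected one-manifold, this is the strict order running
away from that end. -/
def SeparatesFromEnd (ℰ : Filter X) (y z : X) : Prop :=
  ∃ A ∈ ℰ, IsOpen A ∧ IsClosed (insert y A) ∧ z ∉ insert y A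

theorem subset_or_disjoint_of_isClosed_insert {A S : Set X} {y : X} (hA : IsOpen A)
    (hyA : IsClosed (insert y A)) (hS : IsPreconnected S) (hy : y ∉ S) : S ⊆ A ∨ Disjoint S A := by
  refine (hS.subset_or_subset hA hyA.isOpen_compl
    (disjoint_compl_right_iff_subset.2 (subset_insert y A)) fun x hx ↦ ?_).imp_right fun h ↦ ?_
  · by_cases hxA : x ∈ A
    · exact Or.inl hxA
    · exact Or.inr fun h ↦ h.elim (fun hxy ↦ hy (hxy ▸ hx)) hxA
  · exact disjoint_left.2 fun x hx hxA ↦ h hx (subset_insert y A hxA)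

variable {ℰ : Filter X} {c : ℝ → X} {s t : ℝ} {A : Set X}

theorem eq_univ_of_disjoint_image_compl_singleton [PreconnectedSpace X] (hc : IsOpenEmbedding c)
    (hA : IsOpen A) (hne : A.Nonempty) (hcl : IsClosed (insert (c s) A))
    (hIio : Disjoint (c '' Iio s) A) (hIoi : Disjoint (c '' Ioi s) A) : insert (c s) A = univ := by
  by_cases hs : c s ∈ A
  · rw [insert_eq_of_mem hs] at hcl ⊢
    exact IsClopen.eq_univ ⟨hcl, hA⟩ hne
  have hrange : insert (c s) A \ range c = A := by
    have : Disjoint A (range c) := by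
      rw [← image_univ, ← Iio_union_Ici (a := s), ← Ioi_insert, image_union, image_insert_eq]
      simp [hIio.symm, hIoi.symm, hs]
    rw [insert_sdiff_of_mem _ (mem_range_self s), this.sdiff_eq_left]
  have hAcl : IsClosed A := hrange ▸ hcl.sdiff hc.isOpen_range
  simp [IsClopen.eq_univ ⟨hAcl, hA⟩ hne]

namespace SeparatesFromEnd

variable {x y z : X}

theorem ne (h : SeparatesFromEnd ℰ y z) : y ≠ z := by
  rintro rfl
  exact h.choose_spec.2.2.2 (mem_insert _ _)

variable [PreconnectedSpace X] [ℰ.NeBot]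

theorem asymm (hyz : SeparatesFromEnd ℰ y z) : ¬ SeparatesFromEnd ℰ z y := by
  rintro ⟨B, hBℰ, hB, hBcl, hyB⟩
  obtain ⟨A, hAℰ, hA, hAcl, hzA⟩ := hyz
  have hAB : insert y A ∩ insert z B = A ∩ B := by
    rw [insert_inter_of_notMem hyB, inter_insert_of_notMem fun h ↦ hzA (subset_insert y A h)]
  have huniv : A ∩ B = univ :=
    IsClopen.eq_univ ⟨hAB ▸ hAcl.inter hBcl, hA.inter hB⟩ (nonempty_of_mem (inter_mem hAℰ hBℰ))
  exact hyB (subset_insert z B (huniv.ge (mem_univ y)).2)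

variable [T2Space X]

theorem trans (hxy : SeparatesFromEnd ℰ x y) (hyz : SeparatesFromEnd ℰ y z) :
    SeparatesFromEnd ℰ x z := by
  have hxz : z ≠ x := by
    rintro rfl
    exact hxy.asymm hyz
  obtain ⟨A, hAℰ, hA, hAcl, hyA⟩ := hxy
  obtain ⟨B, hBℰ, hB, hBcl, hzB⟩ := hyz
  have hAB : insert x (A ∩ B) = insert x (insert x A ∩ insert y B) := by
    rw [inter_insert_of_notMem hyA, insert_inter_distrib, insert_inter_distrib, insert_idem]
  refine ⟨A ∩ B, inter_mem hAℰ hBℰ, hA.inter hB, ?_, ?_⟩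
  · rw [hAB, insert_eq]
    exact isClosed_singleton.union (hAcl.inter hBcl)
  · exact not_or.2 ⟨hxz, fun h ↦ hzB (subset_insert y B h.2)⟩

theorem of_le (hℰ : ℰ ≤ cocompact X) (hc : IsOpenEmbedding c) (hst : s ≤ t) (hz : z ∉ c '' Icc s t)
    (h : SeparatesFromEnd ℰ (c s) z) : SeparatesFromEnd ℰ (c t) z := by
  -- Going from `c s` to `c t` adds the arc between them to the side of the end, or removes it from
  -- that side, according to whether the arc leads away from the end or towards it.
  obtain ⟨A, hAℰ, hA, hcl, hzA⟩ := h
  have hcompact : IsCompact (c '' Icc s t) := isCompact_Icc.image hc.continuous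
  have hside : ∀ {I : Set ℝ}, IsPreconnected I → s ∉ I → c '' I ⊆ A ∨ Disjoint (c '' I) A :=
    fun hI hsI ↦ subset_or_disjoint_of_isClosed_insert hA hcl
      (hI.image c hc.continuous.continuousOn)
      (hc.injective.mem_set_image.not.2 hsI)
  rcases hside isPreconnected_Iio self_notMem_Iio with hIio | hIio
  · refine ⟨A ∪ c '' Iio t, mem_of_superset hAℰ subset_union_left,
      hA.union (hc.isOpenMap _ isOpen_Iio), ?_, ?_⟩ <;> rw [insert_union_image_Iio hst hIio]
    · exact hcl.union hcompact.isClosed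
    · exact fun h ↦ h.elim hzA hz
  rcases hside isPreconnected_Ioi self_notMem_Ioi with hIoi | hIoi
  · refine ⟨A \ c '' Icc s t, inter_mem hAℰ (hℰ hcompact.compl_mem_cocompact),
      hA.sdiff hcompact.isClosed, ?_, ?_⟩ <;> rw [insert_sdiff_image_Icc hc.injective hst hIio hIoi]
    · exact hcl.sdiff (hc.isOpenMap _ isOpen_Iio)
    · exact fun h ↦ hzA h.1
  · refine (hzA ?_).elim
    rw [eq_univ_of_disjoint_image_compl_singleton hc hA (nonempty_of_mem hAℰ) hcl hIio hIoi]
    trivial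

theorem of_notMem_image_uIcc (hℰ : ℰ ≤ cocompact X) (hc : IsOpenEmbedding c)
    (hz : z ∉ c '' uIcc s t) (h : SeparatesFromEnd ℰ (c s) z) : SeparatesFromEnd ℰ (c t) z := by
  rcases le_total s t with hst | hts
  · exact of_le hℰ hc hst (uIcc_of_le hst ▸ hz) h
  · have hneg := of_le (s := -s) (t := -t) (z := z) hℰ (hc.comp (Homeomorph.neg ℝ).isOpenEmbedding)
      (neg_le_neg hts)
    simp only [Function.comp_apply, Homeomorph.coe_neg, neg_neg, image_comp, image_neg_Icc] at hneg
    exact hneg (uIcc_of_ge hts ▸ hz) h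

theorem eventually_nhds_iff [ChartedSpace ℝ X] (hℰ : ℰ ≤ cocompact X) (hyz : y ≠ z) :
    ∀ᶠ x in 𝓝 y, (SeparatesFromEnd ℰ x z ↔ SeparatesFromEnd ℰ y z) := by
  obtain ⟨c, hc, rfl⟩ := exists_isOpenEmbedding_apply_zero_eq (E := ℝ) y
  have hnhds : c ⁻¹' {z}ᶜ ∈ 𝓝 (0 : ℝ) :=
    (isOpen_compl_singleton.preimage hc.continuous).mem_nhds hyz
  rw [← hc.map_nhds_eq, eventually_map]
  filter_upwards [eventually_uIcc_subset_of_mem_nhds hnhds] with t ht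
  have hz : z ∉ c '' uIcc 0 t := fun ⟨r, hr, hrz⟩ ↦ ht hr hrz
  exact ⟨of_notMem_image_uIcc hℰ hc (uIcc_comm (0 : ℝ) t ▸ hz), of_notMem_image_uIcc hℰ hc hz⟩

theorem isOpen_setOfPred_left [ChartedSpace ℝ X] (hℰ : ℰ ≤ cocompact X) (z : X) :
    IsOpen {y | SeparatesFromEnd ℰ y z} :=
  isOpen_iff_mem_nhds.2 fun _ hy ↦ (eventually_nhds_iff hℰ hy.ne).mono fun _ h ↦ h.2 hy

theorem isClosed_insert_setOfPred_left [ChartedSpace ℝ X] (hℰ : ℰ ≤ cocompact X) (z : X) :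
    IsClosed (insert z {y | SeparatesFromEnd ℰ y z}) := by
  refine isOpen_compl_iff.1 (isOpen_iff_mem_nhds.2 fun y hy ↦ ?_)
  obtain ⟨hyz, hy⟩ := not_or.1 hy
  filter_upwards [eventually_nhds_iff hℰ hyz, isOpen_ne.mem_nhds hyz] with x hx hxz
  exact not_or.2 ⟨hxz, fun h ↦ hy (hx.1 h)⟩

theorem trichotomous [ChartedSpace ℝ X] (hℰ : ℰ ≤ cocompact X)
    (hend : ∀ z, ∀ᶠ y in ℰ, SeparatesFromEnd ℰ y z) (y z : X) :
    SeparatesFromEnd ℰ y z ∨ y = z ∨ SeparatesFromEnd ℰ z y := by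
  by_contra! h
  exact h.2.2 ⟨_, hend z, isOpen_setOfPred_left hℰ z, isClosed_insert_setOfPred_left hℰ z,
    not_or.2 ⟨h.2.1, h.1⟩⟩

end SeparatesFromEnd

theorem exists_linearOrder_orderClosedTopology_of_end [T2Space X] [PreconnectedSpace X]
    [ChartedSpace ℝ X] [ℰ.NeBot] (hℰ : ℰ ≤ cocompact X)
    (hend : ∀ z, ∀ᶠ y in ℰ, SeparatesFromEnd ℰ y z) :
    ∃ _ : LinearOrder X, OrderClosedTopology X := by
  classical
  have : IsStrictTotalOrder X (SeparatesFromEnd ℰ) :=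
    { trichotomous := fun y z hyz hzy ↦
        (((SeparatesFromEnd.trichotomous hℰ hend y z).resolve_left hyz).resolve_right hzy)
      irrefl := fun y hy ↦ hy.ne rfl
      trans := fun _ _ _ ↦ SeparatesFromEnd.trans }
  let _ : LinearOrder X := linearOrderOfSTO (SeparatesFromEnd ℰ)
  refine ⟨inferInstance, orderClosedTopology_of_isOpen (SeparatesFromEnd.isOpen_setOfPred_left hℰ)
    fun y ↦ ?_⟩
  have hIoi : Ioi y = (insert y {x | SeparatesFromEnd ℰ x y})ᶜ := by
    rw [← compl_Iic, ← Iio_insert]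
    rfl
  exact hIoi ▸ (SeparatesFromEnd.isClosed_insert_setOfPred_left hℰ y).isOpen_compl

end EndOrder

/-! ### Countability of relations over one-manifolds -/

section OneManifold

variable {X Y : Type*} [TopologicalSpace X]

theorem map_atBot_le_cocompact {e : ℝ → X} (he : IsEmbedding e)
    (hcl : ∀ t, IsClosed (e '' Iic t)) : map e atBot ≤ cocompact X := by
  refine (hasBasis_cocompact.ge_iff).2 fun K hK ↦ ?_
  have hcompact : IsCompact (e ⁻¹' K ∩ Iic 0) := by
    have := he.isInducing.isCompact_preimage_iff (K := K ∩ e '' Iic 0)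
      (inter_subset_right.trans (image_subset_range e _)) |>.2 (hK.inter_right (hcl 0))
    rwa [preimage_inter, he.injective.preimage_image] at this
  obtain ⟨b, hb⟩ := hcompact.bddBelow
  refine mem_map.2 ?_
  filter_upwards [Iio_mem_atBot b, Iic_mem_atBot 0] with t htb ht0 htK
  exact (hb ⟨htK, ht0⟩).not_gt htb

theorem eventually_separatesFromEnd_map_atBot {e : ℝ → X} (he : IsOpenEmbedding e)
    (hcl : ∀ t, IsClosed (e '' Iic t)) (z : X) :
    ∀ᶠ y in map e atBot, SeparatesFromEnd (map e atBot) y z := by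
  have hz : ∀ᶠ t in atBot, z ∉ e '' Iic t := by
    by_cases hz : z ∈ range e
    · obtain ⟨s, rfl⟩ := hz
      filter_upwards [Iio_mem_atBot s] with t ht
      exact he.injective.mem_set_image.not.2 (notMem_Iic.2 ht)
    · exact .of_forall fun t h ↦ hz (image_subset_range e _ h)
  refine eventually_map.2 (hz.mono fun t ht ↦ ?_)
  have hinsert : insert (e t) (e '' Iio t) = e '' Iic t := by rw [← image_insert_eq, Iio_insert]
  exact ⟨e '' Iio t, image_mem_map (Iio_mem_atBot t), he.isOpenMap _ isOpen_Iio, hinsert ▸ hcl t,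
    hinsert ▸ ht⟩

theorem isClosed_insert_connectedComponentIn_compl_singleton [T1Space X] [LocallyConnectedSpace X]
    (x y : X) : IsClosed (insert x (connectedComponentIn {x}ᶜ y)) := by
  refine isOpen_compl_iff.1 (isOpen_iff_mem_nhds.2 fun z hz ↦ ?_)
  obtain ⟨hzx, hzC⟩ := not_or.1 hz
  filter_upwards [isOpen_compl_singleton.connectedComponentIn.mem_nhds
    (mem_connectedComponentIn (mem_compl_singleton_iff.2 hzx))] with w hw
  refine not_or.2 ⟨connectedComponentIn_subset _ _ hw, fun hwC ↦ hzC ?_⟩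
  rw [connectedComponentIn_eq hwC, ← connectedComponentIn_eq hw]
  exact mem_connectedComponentIn hzx

theorem image_Ioi_subset_connectedComponentIn_compl_singleton {e : ℝ → X} (he : Continuous e)
    (hinj : e.Injective) : e '' Ioi 0 ⊆ connectedComponentIn {e 0}ᶜ (e 1) :=
  (isPreconnected_Ioi.image e he.continuousOn).subset_connectedComponentIn
    ⟨1, mem_Ioi.2 one_pos, rfl⟩ fun _ ⟨_, ht, h⟩ ↦ h ▸ hinj.ne ht.ne'

variable [ChartedSpace ℝ X]

theorem exists_linearOrder_orderClosedTopology_of_ray [T2Space X] [PreconnectedSpace X] {e : ℝ → X}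
    (he : IsOpenEmbedding e) (hcl : ∀ t, IsClosed (e '' Iic t)) :
    ∃ _ : LinearOrder X, OrderClosedTopology X :=
  exists_linearOrder_orderClosedTopology_of_end (map_atBot_le_cocompact he.isEmbedding hcl)
    (eventually_separatesFromEnd_map_atBot he hcl)

variable [TopologicalSpace Y] [SecondCountableTopology Y] {R : SetRel X Y}

theorem countable_image_opens (hclosed : IsClosed R) (hsub : ∀ x, (R.image {x}).Subsingleton)
    (hR : ∀ x, ∃ N ∈ 𝓝 x, (R.image N).Countable)
    (C : TopologicalSpace.Opens X) [PreconnectedSpace C] [LinearOrder C] [OrderClosedTopology C] :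
    (R.image C).Countable := by
  have : LocallyConnectedSpace C := ChartedSpace.locallyConnectedSpace ℝ C
  let S : SetRel C Y := Prod.map Subtype.val id ⁻¹' R
  have himage : ∀ N : Set C, S.image N = R.image (Subtype.val '' N) := fun N ↦ by
    ext y
    simp [SetRel.mem_image, S]
  have hcod : S.cod = R.image C := by
    rw [← SetRel.image_univ_right, himage, image_univ, Subtype.range_coe]
  rw [← hcod]
  refine countable_cod_of_isClosed (hclosed.preimage (continuous_subtype_val.prodMap continuous_id))
    (fun x ↦ ?_) fun x ↦ ?_
  · rw [himage, image_singleton]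
    exact hsub x
  · obtain ⟨N, hN, hNR⟩ := hR x
    refine ⟨Subtype.val ⁻¹' N, continuous_subtype_val.continuousAt hN, hNR.mono ?_⟩
    rw [himage]
    exact SetRel.image_mono (image_preimage_subset _ _)

variable [T2Space X]

theorem countable_image_connectedComponentIn_compl_singleton (hclosed : IsClosed R)
    (hsub : ∀ x, (R.image {x}).Subsingleton) (hR : ∀ x, ∃ N ∈ 𝓝 x, (R.image N).Countable)
    {e : ℝ → X} (he : IsOpenEmbedding e) :
    (R.image (connectedComponentIn {e 0}ᶜ (e 1))).Countable := by
  have : LocallyConnectedSpace X := ChartedSpace.locallyConnectedSpace ℝ X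
  let C : TopologicalSpace.Opens X :=
    ⟨connectedComponentIn {e 0}ᶜ (e 1), isOpen_compl_singleton.connectedComponentIn⟩
  have : PreconnectedSpace C := Subtype.preconnectedSpace isPreconnected_connectedComponentIn
  have h0 : e 0 ∉ C := fun h ↦ connectedComponentIn_subset _ _ h rfl
  -- The exponential moves the end of the component at `e 0` to `-∞`.
  have hexp : ∀ t, e (Real.exp t) ∈ C := fun t ↦
    image_Ioi_subset_connectedComponentIn_compl_singleton he.continuous he.injective
      ⟨_, Real.exp_pos t, rfl⟩
  have hray : IsOpenEmbedding fun t ↦ (⟨e (Real.exp t), hexp t⟩ : C) :=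
    C.isOpenEmbedding'.of_comp _ (g := Subtype.val) (he.comp Real.isOpenEmbedding_exp)
  have hcl : ∀ t, IsClosed ((fun t ↦ (⟨e (Real.exp t), hexp t⟩ : C)) '' Iic t) := fun t ↦ by
    have himage : (fun t ↦ (⟨e (Real.exp t), hexp t⟩ : C)) '' Iic t =
        Subtype.val ⁻¹' (e '' Icc 0 (Real.exp t)) := by
      ext ⟨x, hx⟩
      constructor
      · rintro ⟨s, hst, hs⟩
        exact ⟨Real.exp s, ⟨(Real.exp_pos s).le, Real.exp_le_exp.2 hst⟩, congrArg Subtype.val hs⟩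
      · rintro ⟨r, ⟨hr0, hrt⟩, rfl⟩
        have hr : 0 < r := hr0.lt_of_ne fun h ↦ h0 (h ▸ hx)
        exact ⟨Real.log r, (Real.log_le_iff_le_exp hr).2 hrt,
          Subtype.ext (congrArg e (Real.exp_log hr))⟩
    rw [himage]
    exact (isCompact_Icc.image he.continuous).isClosed.preimage continuous_subtype_val
  obtain ⟨_, _⟩ := exists_linearOrder_orderClosedTopology_of_ray hray hcl
  exact countable_image_opens hclosed hsub hR C

theorem connectedComponent_apply_zero_subset {e : ℝ → X} (he : IsOpenEmbedding e) :
    connectedComponent (e 0) ⊆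
      insert (e 0) (connectedComponentIn {e 0}ᶜ (e 1) ∪ connectedComponentIn {e 0}ᶜ (e (-1))) := by
  have : LocallyConnectedSpace X := ChartedSpace.locallyConnectedSpace ℝ X
  set A := connectedComponentIn {e 0}ᶜ (e 1)
  set B := connectedComponentIn {e 0}ᶜ (e (-1))
  have hneg : (e ∘ Neg.neg) '' Ioi 0 ⊆ B := by
    simpa only [Function.comp_apply, neg_zero] using
      image_Ioi_subset_connectedComponentIn_compl_singleton (he.continuous.comp continuous_neg)
        (he.injective.comp neg_injective)
  have hrange : range e ⊆ insert (e 0) (A ∪ B) := by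
    rintro _ ⟨t, rfl⟩
    rcases lt_trichotomy t 0 with ht | rfl | ht
    · exact Or.inr (Or.inr (hneg ⟨-t, neg_pos.2 ht, congrArg e (neg_neg t)⟩))
    · exact Or.inl rfl
    · exact Or.inr (Or.inl (image_Ioi_subset_connectedComponentIn_compl_singleton he.continuous
        he.injective ⟨t, ht, rfl⟩))
  have hclosed : IsClosed (insert (e 0) (A ∪ B)) := by
    rw [insert_union_distrib]
    exact (isClosed_insert_connectedComponentIn_compl_singleton _ _).union
      (isClosed_insert_connectedComponentIn_compl_singleton _ _)
  have hopen : IsOpen (insert (e 0) (A ∪ B)) := by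
    have hunion : insert (e 0) (A ∪ B) = range e ∪ (A ∪ B) :=
      subset_antisymm (insert_subset (Or.inl (mem_range_self 0)) subset_union_right)
        (union_subset hrange (subset_insert _ _))
    rw [hunion]
    exact he.isOpen_range.union (isOpen_compl_singleton.connectedComponentIn.union
      isOpen_compl_singleton.connectedComponentIn)
  exact IsClopen.connectedComponent_subset ⟨hclosed, hopen⟩ (mem_insert _ _)

theorem countable_image_connectedComponent (hclosed : IsClosed R)
    (hsub : ∀ x, (R.image {x}).Subsingleton) (hR : ∀ x, ∃ N ∈ 𝓝 x, (R.image N).Countable) (x : X) :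
    (R.image (connectedComponent x)).Countable := by
  obtain ⟨e, he, rfl⟩ := exists_isOpenEmbedding_apply_zero_eq (E := ℝ) x
  have hpos := countable_image_connectedComponentIn_compl_singleton hclosed hsub hR he
  have hneg := countable_image_connectedComponentIn_compl_singleton hclosed hsub hR
    (he.comp (Homeomorph.neg ℝ).isOpenEmbedding)
  simp only [Function.comp_apply, Homeomorph.coe_neg, neg_zero] at hneg
  refine Countable.mono (SetRel.image_mono (connectedComponent_apply_zero_subset he)) ?_
  rw [insert_eq, SetRel.image_union, SetRel.image_union]
  exact (hsub _).countable.union (hpos.union hneg)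

end OneManifold

/-! ### The leaf topology -/

/-- The charted space structure whose charts are the inverses of open embeddings `H → X`; one
embedding is chosen at every point. -/
abbrev chartedSpaceOfIsOpenEmbedding {H X : Type*} [TopologicalSpace H] [Nonempty H]
    [TopologicalSpace X] (h : ∀ x : X, ∃ e : H → X, IsOpenEmbedding e ∧ x ∈ range e) :
    ChartedSpace H X :=
  let chart x := ((h x).choose_spec.1.toOpenPartialHomeomorph).symm
  { atlas := range chart
    chartAt := chart
    mem_chart_source := fun x ↦ by simpa [chart] using (h x).choose_spec.2
    chart_mem_atlas := mem_range_self }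

namespace Foliation

section LeafSpace

variable {M : Type u} [TopologicalSpace M] {p q : ℕ} (F : Foliation M p q) {i j : F.ι}

/-- The inverse of the `i`-th chart, as a map from Euclidean space to the manifold. -/
def chartInv (i : F.ι) (a : (Fin p → ℝ) × (Fin q → ℝ)) : M := (F.chart i).symm a

theorem isOpenEmbedding_chartInv (i : F.ι) : IsOpenEmbedding (F.chartInv i) :=
  (F.isOpen i).isOpenEmbedding_subtypeVal.comp (F.chart i).symm.isOpenEmbedding

theorem chartInv_mem (i : F.ι) (a : (Fin p → ℝ) × (Fin q → ℝ)) : F.chartInv i a ∈ F.U i :=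
  ((F.chart i).symm a).2

theorem chartInv_chart {x : M} (hx : x ∈ F.U i) : F.chartInv i (F.chart i ⟨x, hx⟩) = x := by
  simp [chartInv]

variable {F} in
theorem chart_eq_of_chartInv_eq {x : M} {a : (Fin p → ℝ) × (Fin q → ℝ)} (h : F.chartInv i a = x)
    (hx : x ∈ F.U i) : F.chart i ⟨x, hx⟩ = a := by
  subst h
  simp [chartInv]

theorem exists_chartInv_eq (x : M) : ∃ i a, F.chartInv i a = x :=
  let ⟨i, hi⟩ := F.covers x
  ⟨i, F.chart i ⟨x, hi⟩, F.chartInv_chart hi⟩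

variable {F} in
theorem snd_eq_snd_of_chartInv_eq {a a' b b' : (Fin p → ℝ) × (Fin q → ℝ)}
    (hb : F.chartInv i a = F.chartInv j b) (hb' : F.chartInv i a' = F.chartInv j b')
    (ha : a.2 = a'.2) : b.2 = b'.2 := by
  have hj : F.chartInv i a ∈ F.U j := hb ▸ F.chartInv_mem j b
  have hj' : F.chartInv i a' ∈ F.U j := hb' ▸ F.chartInv_mem j b'
  have h := F.compat i j _ _ (F.chartInv_mem i a) hj (F.chartInv_mem i a') hj'
  rw [chart_eq_of_chartInv_eq rfl, chart_eq_of_chartInv_eq rfl, chart_eq_of_chartInv_eq hb.symm,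
    chart_eq_of_chartInv_eq hb'.symm] at h
  exact h ha

/-- The disjoint union of the leaves of a foliation: the points of the manifold, with the finest
topology for which the parametrisations of all plaques are continuous. -/
def LeafSpace (_F : Foliation M p q) : Type u := M

/-- The identity map from a manifold to the leaf space of a foliation on it; in general only its
inverse is continuous. -/
def toLeafSpace : M ≃ F.LeafSpace := Equiv.refl M

/-- The parametrisation of the plaque at height `y` in the `i`-th chart. -/
def plaqueMap (i : F.ι) (y : Fin q → ℝ) (x : Fin p → ℝ) : F.LeafSpace :=
  F.toLeafSpace (F.chartInv i (x, y))

instance : TopologicalSpace F.LeafSpace :=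
  ⨆ i, ⨆ y, .coinduced (F.plaqueMap i y) inferInstance

theorem isOpen_leafSpace_iff {W : Set F.LeafSpace} :
    IsOpen W ↔ ∀ i y, IsOpen (F.plaqueMap i y ⁻¹' W) := by
  simp only [isOpen_iSup_iff, isOpen_coinduced]

theorem continuous_toLeafSpace_symm : Continuous F.toLeafSpace.symm :=
  continuous_def.2 fun _ hW ↦ F.isOpen_leafSpace_iff.2 fun i y ↦
    hW.preimage ((F.isOpenEmbedding_chartInv i).continuous.comp (.prodMk_left y))

instance [T2Space M] : T2Space F.LeafSpace :=
  .of_injective_continuous F.toLeafSpace.symm.injective F.continuous_toLeafSpace_symm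

variable {F} in
theorem chartInv_eq_of_plaqueMap_eq {x x' : Fin p → ℝ} {y y' : Fin q → ℝ}
    (h : F.plaqueMap i y x = F.plaqueMap j y' x') : F.chartInv i (x, y) = F.chartInv j (x', y') :=
  F.toLeafSpace.injective h

theorem isOpenEmbedding_plaqueMap (i : F.ι) (y : Fin q → ℝ) :
    IsOpenEmbedding (F.plaqueMap i y) := by
  refine .of_continuous_injective_isOpenMap
    (continuous_def.2 fun _ hW ↦ F.isOpen_leafSpace_iff.1 hW i y)
    (fun x x' h ↦ congrArg Prod.fst
      ((F.isOpenEmbedding_chartInv i).injective (chartInv_eq_of_plaqueMap_eq h)))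
    fun O hO ↦ F.isOpen_leafSpace_iff.2 fun j z ↦ isOpen_iff_mem_nhds.2 ?_
  rintro t₀ ⟨s₀, hs₀, hst₀⟩
  have hnhds : (fun t ↦ F.chartInv j (t, z)) ⁻¹' (F.chartInv i '' (O ×ˢ univ)) ∈ 𝓝 t₀ :=
    (((F.isOpenEmbedding_chartInv i).isOpenMap _ (hO.prod isOpen_univ)).preimage
      ((F.isOpenEmbedding_chartInv j).continuous.comp (.prodMk_left z))).mem_nhds
      ⟨(s₀, y), ⟨hs₀, trivial⟩, chartInv_eq_of_plaqueMap_eq hst₀⟩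
  filter_upwards [hnhds]
  rintro t ⟨⟨s, y'⟩, ⟨hs, -⟩, hst⟩
  obtain rfl : y' = y := snd_eq_snd_of_chartInv_eq hst.symm
    (chartInv_eq_of_plaqueMap_eq hst₀).symm rfl
  exact ⟨s, hs, congrArg F.toLeafSpace hst⟩

theorem exists_plaqueMap_eq (z : F.LeafSpace) : ∃ i y x, F.plaqueMap i y x = z :=
  let ⟨i, a, h⟩ := F.exists_chartInv_eq (F.toLeafSpace.symm z)
  ⟨i, a.2, a.1, h⟩

theorem plaqueFibre_subset_preimage_range_plaqueMap (i : F.ι) (y : Fin q → ℝ) :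
    F.plaqueFibre i y ⊆ F.toLeafSpace ⁻¹' range (F.plaqueMap i y) := by
  rintro x ⟨hx, rfl⟩
  exact ⟨(F.chart i ⟨x, hx⟩).1, congrArg F.toLeafSpace (F.chartInv_chart hx)⟩

variable {F}

theorem connectedComponent_eq_of_samePlaque {x y : M} (h : F.samePlaque x y) :
    connectedComponent (F.toLeafSpace x) = connectedComponent (F.toLeafSpace y) := by
  obtain ⟨_, ⟨i, z, w, -, rfl⟩, hx, hy⟩ := h
  have hfibre : connectedComponentIn (F.plaqueFibre i z) w ⊆
      F.toLeafSpace ⁻¹' range (F.plaqueMap i z) :=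
    (connectedComponentIn_subset _ _).trans (F.plaqueFibre_subset_preimage_range_plaqueMap i z)
  have hrange : IsPreconnected (range (F.plaqueMap i z)) :=
    isPreconnected_range (F.isOpenEmbedding_plaqueMap i z).continuous
  exact connectedComponent_eq (hrange.subset_connectedComponent (hfibre hx) (hfibre hy))

theorem connectedComponent_eq_of_leafRel {x y : M} (h : F.leafRel x y) :
    connectedComponent (F.toLeafSpace x) = connectedComponent (F.toLeafSpace y) := by
  induction h with
  | rel x y h => exact connectedComponent_eq_of_samePlaque h
  | refl x => rfl
  | symm x y _ ih => exact ih.symm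
  | trans x y z _ _ ihxy ihyz => exact ihxy.trans ihyz

end LeafSpace

section DimensionOne

variable {M : Type u} [TopologicalSpace M] {q : ℕ} (F : Foliation M 1 q)

instance : ChartedSpace ℝ F.LeafSpace :=
  chartedSpaceOfIsOpenEmbedding fun z ↦
    let ⟨i, y, x, h⟩ := F.exists_plaqueMap_eq z
    ⟨F.plaqueMap i y ∘ (Homeomorph.funUnique (Fin 1) ℝ).symm,
      (F.isOpenEmbedding_plaqueMap i y).comp (Homeomorph.isOpenEmbedding _),
      Homeomorph.funUnique (Fin 1) ℝ x, by
        rw [Function.comp_apply, Homeomorph.symm_apply_apply, h]⟩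

theorem countable_setOfPred_leafRel_chartInv [T2Space M] (i : F.ι) (t : Fin 1 → ℝ) (x : M) :
    {y | F.leafRel x (F.chartInv i (t, y))}.Countable := by
  let R : SetRel F.LeafSpace (Fin q → ℝ) := {a | F.toLeafSpace.symm a.1 = F.chartInv i (t, a.2)}
  have hclosed : IsClosed R :=
    isClosed_eq (F.continuous_toLeafSpace_symm.comp continuous_fst)
      ((F.isOpenEmbedding_chartInv i).continuous.comp (continuous_const.prodMk continuous_snd))
  have hplaque : ∀ j z, (R.image (range (F.plaqueMap j z))).Subsingleton := by
    rintro j z y ⟨_, ⟨s, rfl⟩, hy⟩ y' ⟨_, ⟨s', rfl⟩, hy'⟩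
    exact snd_eq_snd_of_chartInv_eq hy hy' rfl
  have hnhds : ∀ w, ∃ N ∈ 𝓝 w, (R.image N).Subsingleton := fun w ↦ by
    obtain ⟨j, z, s, rfl⟩ := F.exists_plaqueMap_eq w
    exact ⟨_, (F.isOpenEmbedding_plaqueMap j z).isOpen_range.mem_nhds ⟨s, rfl⟩, hplaque j z⟩
  have hcount : (R.image (connectedComponent (F.toLeafSpace x))).Countable := by
    refine countable_image_connectedComponent hclosed (fun w ↦ ?_) (fun w ↦ ?_) _
    all_goals obtain ⟨N, hN, hNR⟩ := hnhds w
    · exact hNR.anti (SetRel.image_mono (singleton_subset_iff.2 (mem_of_mem_nhds hN)))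
    · exact ⟨N, hN, hNR.countable⟩
  refine hcount.mono fun y hy ↦ SetRel.mem_image.2 ⟨F.toLeafSpace (F.chartInv i (t, y)), ?_, rfl⟩
  rw [connectedComponent_eq_of_leafRel hy]
  exact mem_connectedComponent

end DimensionOne

end Foliation

/-! ### The number of leaves -/

section Cardinality

open Cardinal

theorem mk_option_le_continuum {α : Type u} (hα : #α ≤ 𝔠) : #(Option α) ≤ 𝔠 := by
  rw [mk_option]
  exact add_le_of_le aleph0_le_continuum hα (one_le_aleph0.trans aleph0_le_continuum)

theorem exists_mk_le_continuum_forall_op_mem {ι : Type v} {M : Type u} (hι : #ι ≤ 𝔠)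
    (op : ι → (ℕ → M) → M) (x₀ : M) :
    ∃ K : Set M, x₀ ∈ K ∧ (∀ i g, (∀ n, g n ∈ K) → op i g ∈ K) ∧ #K ≤ 𝔠 := by
  -- The generated points are named by well-founded trees with countable branching.
  let arity : Option ι → Type v := fun a ↦ a.elim PEmpty fun _ ↦ ULift ℕ
  let eval : WType arity → M := WType.elim M fun
    | ⟨none, _⟩ => x₀
    | ⟨some i, g⟩ => op i fun n ↦ g ⟨n⟩
  have hW : #(WType arity) ≤ 𝔠 := by
    refine WType.cardinalMk_le_of_le ?_
    have hpow : ∀ a, 𝔠 ^ #(arity a) ≤ 𝔠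
      | none => by simp [arity, aleph0_le_continuum.trans' one_le_aleph0]
      | some _ => by simp [arity]
    calc (Cardinal.sum fun a ↦ 𝔠 ^ #(arity a)) ≤ Cardinal.sum fun _ : Option ι ↦ 𝔠 :=
          sum_le_sum _ _ hpow
      _ = #(Option ι) * 𝔠 := sum_const' _ _
      _ ≤ 𝔠 * 𝔠 := mul_le_mul_left (mk_option_le_continuum hι) 𝔠
      _ = 𝔠 := continuum_mul_self
  refine ⟨range eval, ⟨⟨none, PEmpty.elim⟩, rfl⟩, fun i g hg ↦ ?_, ?_⟩
  · choose w hw using hg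
    exact ⟨⟨some i, fun n ↦ w n.down⟩, congrArg (op i) (funext hw)⟩
  · rw [← lift_le_continuum.{_, v}]
    exact mk_range_le_lift.trans (lift_le_continuum.2 hW)

section ChartedSpace

variable {H : Type v} {M : Type u} [TopologicalSpace H] [TopologicalSpace M] [ChartedSpace H M]

variable (H) in
theorem firstCountableTopology_of_chartedSpace [FirstCountableTopology H] :
    FirstCountableTopology M where
  nhds_generated_countable x := by
    rw [← (chartAt H x).symm_map_nhds_eq (mem_chart_source H x)]
    infer_instance

theorem mk_le_continuum_of_chartedSpace [FirstCountableTopology H] [T2Space M] [ConnectedSpace M]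
    (hH : #H ≤ 𝔠) : #M ≤ 𝔠 := by
  have : FirstCountableTopology M := firstCountableTopology_of_chartedSpace H
  obtain ⟨x₀⟩ : Nonempty M := inferInstance
  obtain ⟨K, hx₀, hop, hK⟩ := exists_mk_le_continuum_forall_op_mem (mk_option_le_continuum hH)
    (fun i g ↦ i.elim (limUnder atTop g) (chartAt H (g 0)).symm) x₀
  have hopen : IsOpen K := isOpen_iff_mem_nhds.2 fun x hx ↦ by
    filter_upwards [chart_source_mem_nhds H x] with y hy
    exact (chartAt H x).left_inv hy ▸ hop (some (chartAt H x y)) (fun _ ↦ x) fun _ ↦ hx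
  have hclosed : IsClosed K := isClosed_of_closure_subset fun x hx ↦ by
    obtain ⟨g, hg, hgx⟩ := mem_closure_iff_seq_limit.1 hx
    exact hgx.limUnder_eq ▸ hop none g hg
  rw [← mk_univ, ← IsClopen.eq_univ ⟨hclosed, hopen⟩ ⟨x₀, hx₀⟩]
  exact hK

end ChartedSpace

theorem mk_pi_fin_real_le_continuum (n : ℕ) : #(Fin n → ℝ) ≤ 𝔠 := by
  simpa only [mk_pi, prod_const, lift_uzero, mk_fin, lift_natCast, mk_real, power_natCast] using
    power_nat_le aleph0_le_continuum

theorem continuum_le_mk_pi_fin_real {n : ℕ} (hn : 0 < n) : 𝔠 ≤ #(Fin n → ℝ) := by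
  have : NeZero n := ⟨hn.ne'⟩
  exact mk_real ▸ mk_le_of_injective (Function.const_injective (α := Fin n))

namespace Foliation

variable {M : Type u} [TopologicalSpace M] {p q : ℕ} (F : Foliation M p q)

/-- The leaf through a point, as an element of the set of all leaves. -/
def leafThrough (x : M) : {L : Set M // F.IsLeaf L} := ⟨{y | F.leafRel x y}, x, rfl⟩

theorem leafThrough_surjective : Function.Surjective F.leafThrough :=
  fun ⟨_, x, h⟩ ↦ ⟨x, Subtype.ext h.symm⟩

variable {F} in
theorem leafRel_of_leafThrough_eq {x y : M} (h : F.leafThrough y = F.leafThrough x) :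
    F.leafRel x y :=
  (congrArg Subtype.val h).subset (Relation.EqvGen.refl y)

variable [T2Space M]

theorem mk_leaves_le_continuum [ConnectedSpace M] : #{L : Set M // F.IsLeaf L} ≤ 𝔠 := by
  let _ : ChartedSpace ((Fin p → ℝ) × (Fin q → ℝ)) M :=
    chartedSpaceOfIsOpenEmbedding fun x ↦
      (F.exists_chartInv_eq x).imp' F.chartInv fun i h ↦ ⟨F.isOpenEmbedding_chartInv i, h⟩
  have hmodel : #((Fin p → ℝ) × (Fin q → ℝ)) ≤ 𝔠 := by
    rw [mk_prod, lift_id, lift_id]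
    exact mul_le_of_le aleph0_le_continuum (mk_pi_fin_real_le_continuum p)
      (mk_pi_fin_real_le_continuum q)
  exact (mk_le_of_surjective F.leafThrough_surjective).trans
    (mk_le_continuum_of_chartedSpace hmodel)

theorem continuum_le_mk_leaves [Nonempty M] (hq : 0 < q) (F : Foliation M 1 q) :
    𝔠 ≤ #{L : Set M // F.IsLeaf L} := by
  obtain ⟨i, -⟩ := F.covers (Classical.arbitrary M)
  let f : ULift.{u} (Fin q → ℝ) → {L : Set M // F.IsLeaf L} :=
    fun y ↦ F.leafThrough (F.chartInv i (0, y.down))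
  have hcard : 𝔠 ≤ #(ULift.{u} (Fin q → ℝ)) := by
    rw [mk_uLift, continuum_le_lift]
    exact continuum_le_mk_pi_fin_real hq
  have : Uncountable (ULift.{u} (Fin q → ℝ)) :=
    aleph0_lt_mk_iff.1 (aleph0_lt_continuum.trans_le hcard)
  by_contra! hlt
  obtain ⟨L, hL⟩ := exists_uncountable_fiber f (hlt.trans_le hcard)
  obtain ⟨x, rfl⟩ := F.leafThrough_surjective L
  have hfibre : (f ⁻¹' {F.leafThrough x}).Countable :=
    ((F.countable_setOfPred_leafRel_chartInv i 0 x).preimage ULift.down_injective).mono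
      fun _ hy ↦ leafRel_of_leafThrough_eq hy
  exact not_countable_iff.2 hL hfibre.to_subtype

end Foliation

end Cardinality

theorem statement0_general {M : Type u} [TopologicalSpace M] [T2Space M] [ConnectedSpace M] {q : ℕ}
    (hq : 0 < q) (F : Foliation M 1 q) :
    Cardinal.mk {L : Set M // F.IsLeaf L} = Cardinal.continuum :=
  le_antisymm F.mk_leaves_le_continuum (F.continuum_le_mk_leaves hq)

/-- A dimension-one foliation on a connected `n`-manifold (`n ≥ 2`) has
exactly `𝔠 = 2^ℵ₀` many leaves. -/
theorem statement0 (n : ℕ) (hn : 2 ≤ n) (M : Type) [TopologicalSpace M]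
    (hM : IsTopManifold M n) (hconn : ConnectedSpace M)
    (F : Foliation M 1 (n - 1)) :
    Cardinal.mk {L : Set M // F.IsLeaf L} = Cardinal.continuum := by
  have : T2Space M := hM.2.1
  exact statement0_general (by omega) F
end
end

section
/- Let 𝕊¹ be the unit circle in ℝ² and let ℱ be a dimension-one foliation on the 2-manifold 𝕊¹ × 𝕃₊. Then exactly one of the following holds: (i) the set C = {α ∈ 𝕃₊ : 𝕊¹ × {α} is a leaf of ℱ} is a closed unbounded subset of 𝕃₊; (ii) ℱ is ultimately vertical, i.e. there is α ∈ 𝕃₊ such that for every z ∈ 𝕊¹ the set {z} × (α,→) is contained in a single leaf of ℱ (the restriction of ℱ to 𝕊¹ × (α,→) is the trivial product foliation by long rays). -/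
noncomputable section

open Set Topology Filter

universe u

/-!
The circle enters only through its covering `e : ℝ → 𝕊¹`. Fodor's pressing-down lemma on the long
ray gives, around every angle, a strip `[a, b] × [β, →)` each of whose initial parts lies in a
single chart. If, from some height on, the slices `[u, w] × {α}` of such a strip are never contained
in a plaque, then pressing down once more gives an angle strictly between `u` and `w` over which
every leaf is trapped: followed back to a fixed height it stays in the strip. The chart coordinate
of the point it comes from is a continuous real function on the long ray, hence eventually constant,
so the foliation is ultimately vertical over that angle.

A strip cannot have arbitrarily high horizontal slices abutting on an ultimately vertical angle, so
the set of such angles is clopen in `ℝ`. If it is everything, countably many strips give a common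
height from which the foliation is vertical. If it is empty, every strip has a closed unbounded set
of horizontal slices, and the intersection of countably many of these sets is still unbounded.
-/

/-- A linear order in which every nonempty set bounded above has a least upper bound, made into a
conditionally complete linear order by choosing suprema and infima; the sets without one get an
arbitrary fixed value. -/
abbrev conditionallyCompleteLinearOrderOfExistsIsLUB {α : Type*} [LinearOrder α] [Nonempty α]
    (h : ∀ T : Set α, T.Nonempty → BddAbove T → ∃ b, IsLUB T b) :
    ConditionallyCompleteLinearOrder α :=
  open scoped Classical in
  let sup : Set α → α := fun T =>
    if hT : T.Nonempty ∧ BddAbove T then (h T hT.1 hT.2).choose else Classical.arbitrary α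
  have isLUB_sup (T : Set α) (hne : T.Nonempty) (hT : BddAbove T) : IsLUB T (sup T) := by
    simp only [sup, dif_pos (And.intro hne hT)]
    exact (h T hne hT).choose_spec
  { ‹LinearOrder α›, (LinearOrder.toLattice : Lattice α) with
    sSup := sup
    sInf := fun T => if T.Nonempty ∧ BddBelow T then sup (lowerBounds T) else Classical.arbitrary α
    isLUB_csSup := isLUB_sup
    isGLB_csInf := fun T hne hT => by
      simp only [if_pos (And.intro hne hT)]
      exact isLUB_lowerBounds.1 (isLUB_sup _ hT hne.bddAbove_lowerBounds)
    csSup_of_not_bddAbove := fun T hT => by simp [sup, hT]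
    csInf_of_not_bddBelow := fun T hT => by simp [sup, hT] }

theorem exists_isLUB_lex {α β : Type*} [LinearOrder α] [WellFoundedLT α] [PartialOrder β]
    (hβ : ∀ B : Set β, B.Nonempty → ∃ b, IsGLB B b) {T : Set (α ×ₗ β)} (hT : BddAbove T) :
    ∃ m, IsLUB T m := by
  obtain ⟨a, ⟨r, hr⟩, ha⟩ := wellFounded_lt.has_min
    {a : α | ∃ r : β, toLex (a, r) ∈ upperBounds T} ⟨_, _, hT.choose_spec⟩
  obtain ⟨b, hb⟩ := hβ {r | toLex (a, r) ∈ upperBounds T} ⟨r, hr⟩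
  refine ⟨toLex (a, b), fun t ht => ?_, fun u hu => ?_⟩
  · rcases Prod.Lex.le_iff.1 (hr ht) with hlt | ⟨heq, -⟩
    · exact Prod.Lex.le_iff.2 (.inl hlt)
    · refine Prod.Lex.le_iff.2 (.inr ⟨heq, hb.2 fun s hs => ?_⟩)
      exact ((Prod.Lex.le_iff.1 (hs ht)).resolve_left heq.not_lt).2
  · rcases (not_lt.1 (ha (ofLex u).1 ⟨_, hu⟩)).lt_or_eq with hlt | heq
    · exact Prod.Lex.le_iff.2 (.inl hlt)
    · exact Prod.Lex.le_iff.2 (.inr ⟨heq, hb.1 (by simpa [heq] using hu)⟩)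

theorem exists_isGLB_Ico {a b : ℝ} (B : Set (Ico a b)) (hB : B.Nonempty) : ∃ m, IsGLB B m :=
  let : Inhabited (Ico a b) := ⟨hB.some⟩
  ⟨sInf B, isGLB_csInf hB ⟨⟨a, le_rfl, hB.some.2.1.trans_lt hB.some.2.2⟩, fun x _ => x.2.1⟩⟩

namespace Omega1

instance : WellFoundedLT Omega1 :=
  inferInstanceAs (WellFoundedLT {o : Ordinal.{0} // o < (Cardinal.aleph 1).ord})

instance : Nonempty Omega1 := ⟨⟨0, by simpa using Ordinal.omega_pos 1⟩⟩

theorem exists_forall_lt {κ : Type*} [Countable κ] (f : κ → Omega1) : ∃ b, ∀ k, f k < b := by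
  have hlt (k : κ) : (f k).toOrdinal < (Cardinal.aleph 1).ord := (f k).2
  have hsup : ⨆ k, (f k).toOrdinal < (Cardinal.aleph 1).ord := by
    rw [Cardinal.ord_aleph] at hlt ⊢
    exact Ordinal.iSup_lt_omega_one hlt
  exact ⟨⟨_, (Cardinal.isSuccLimit_ord (Cardinal.aleph0_le_aleph 1)).succ_lt hsup⟩, fun k =>
    Order.lt_succ_of_le (le_ciSup ⟨_, forall_mem_range.2 fun k => (hlt k).le⟩ k)⟩

end Omega1

namespace ClosedLongRay

instance : DenselyOrdered ClosedLongRay :=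
  inferInstanceAs (DenselyOrdered (Omega1 ×ₗ Ico (0 : ℝ) 1))

instance : Nonempty ClosedLongRay := inferInstanceAs (Nonempty (Omega1 × Ico (0 : ℝ) 1))

theorem exists_forall_lt {κ : Type*} [Countable κ] (f : κ → ClosedLongRay) :
    ∃ b, ∀ k, f k < b := by
  let pair (x : ClosedLongRay) : Omega1 × Ico (0 : ℝ) 1 := ofLex x
  obtain ⟨o, ho⟩ := Omega1.exists_forall_lt fun k => (pair (f k)).1
  exact ⟨toLex (o, ⊥), fun k => Prod.Lex.lt_iff.2 (.inl (ho k))⟩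

end ClosedLongRay

namespace LongRay

instance : OrdConnected {x : ClosedLongRay | ∃ y, y < x} :=
  ⟨fun _ ⟨y, hy⟩ _ _ _ hc => ⟨y, hy.trans_le hc.1⟩⟩

instance : OrderTopology LongRay :=
  orderTopology_of_ordConnected (t := {x : ClosedLongRay | ∃ y, y < x})

instance : DenselyOrdered LongRay :=
  inferInstanceAs (DenselyOrdered {x : ClosedLongRay | ∃ y, y < x})

theorem exists_forall_lt {κ : Type*} [Countable κ] (f : κ → LongRay) : ∃ b, ∀ k, f k < b := by
  obtain ⟨y⟩ : Nonempty ClosedLongRay := inferInstance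
  obtain ⟨b, hb⟩ := ClosedLongRay.exists_forall_lt fun k : Option κ => k.elim y fun k => (f k).1
  exact ⟨⟨b, y, hb none⟩, fun k => hb (some k)⟩

instance : Nonempty LongRay := (exists_forall_lt Empty.elim).nonempty

instance : NoMaxOrder LongRay := ⟨fun a => (exists_forall_lt fun _ : Unit => a).imp fun _ h => h ()⟩

instance : NoMinOrder LongRay := ⟨fun ⟨_, _, hyx⟩ =>
  let ⟨z, hyz, hzx⟩ := exists_between hyx
  ⟨⟨z, _, hyz⟩, hzx⟩⟩

instance : CountableInterFilter (atTop : Filter LongRay) := by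
  refine ⟨fun 𝒮 h𝒮 hmem => ?_⟩
  choose! β hβ using fun s hs => mem_atTop_sets.1 (hmem s hs)
  have := h𝒮.to_subtype
  obtain ⟨b, hb⟩ := exists_forall_lt fun s : 𝒮 => β s
  exact mem_atTop_sets.2 ⟨b, fun a ha s hs => hβ s hs a ((hb ⟨s, hs⟩).le.trans ha)⟩

theorem exists_isLUB {T : Set LongRay} (hne : T.Nonempty) (hT : BddAbove T) : ∃ m, IsLUB T m := by
  obtain ⟨m, hm⟩ := exists_isLUB_lex exists_isGLB_Ico ((Subtype.mono_coe _).map_bddAbove hT)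
  obtain ⟨t, ht⟩ := hne
  obtain ⟨y, hy⟩ := t.2
  exact ⟨⟨m, y, hy.trans_le (hm.1 (mem_image_of_mem _ ht))⟩, IsLUB.of_image Subtype.coe_le_coe hm⟩

/-- Suprema and infima on the open long ray. Not an instance, so that order relations on `LongRay`
are still elaborated with the lexicographic order. -/
abbrev conditionallyCompleteLinearOrder : ConditionallyCompleteLinearOrder LongRay :=
  conditionallyCompleteLinearOrderOfExistsIsLUB fun _ => exists_isLUB

end LongRay

section LongOrder

variable {R : Type*} [ConditionallyCompleteLinearOrder R] [NoMaxOrder R] [TopologicalSpace R]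
  [OrderTopology R] [CountableInterFilter (atTop : Filter R)]

/- This is Fodor's pressing-down lemma: were the conclusion false, every `γ` would have a `d γ > γ`
beyond which no `Q k α` holds on `(γ, α]`, and the supremum of the iterates of `d` would violate
the hypothesis. -/
theorem exists_frequently_forall_Ioc {κ : Type*} [Countable κ] {Q : κ → R → R → Prop}
    (h : ∀ᶠ α in atTop, ∃ k, ∀ᶠ s in 𝓝[≤] α, Q k α s) :
    ∃ k γ, ∃ᶠ α in atTop, ∀ s ∈ Ioc γ α, Q k α s := by
  by_contra! hcon
  have : Nonempty R := ⟨sSup ∅⟩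
  obtain ⟨α₀, hα₀⟩ := eventually_atTop.1 h
  have hnext (γ : R) : ∃ δ > γ, ∀ α ≥ δ, ∀ k, ∃ s ∈ Ioc γ α, ¬ Q k α s := by
    have hfail : ∀ᶠ α in atTop, ∀ k, ∃ s ∈ Ioc γ α, ¬ Q k α s :=
      eventually_countable_forall.2 fun k => by simpa using hcon k γ
    obtain ⟨δ, hδ, hγδ⟩ := ((eventually_forall_ge_atTop.2 hfail).and (eventually_gt_atTop γ)).exists
    exact ⟨δ, hγδ, hδ⟩
  choose d hd_gt hd using hnext
  let g (n : ℕ) : R := d^[n] α₀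
  have hg_succ (n : ℕ) : g (n + 1) = d (g n) := Function.iterate_succ_apply' d n α₀
  obtain ⟨b, hb⟩ :=
    (eventually_countable_forall.2 fun n => eventually_ge_atTop (g n)).exists
  have hle (n : ℕ) : g n ≤ ⨆ n, g n := le_ciSup ⟨b, forall_mem_range.2 hb⟩ n
  have hlt : α₀ < ⨆ n, g n := (hd_gt α₀).trans_le (hle 1)
  obtain ⟨k, hk⟩ := hα₀ _ hlt.le
  obtain ⟨l, hl, hlQ⟩ := (mem_nhdsLE_iff_exists_Ioc_subset' hlt).1 hk
  obtain ⟨n, hn⟩ := exists_lt_of_lt_ciSup hl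
  obtain ⟨s, hs, hQ⟩ := hd (g n) _ (hg_succ n ▸ hle (n + 1)) k
  exact hQ (hlQ ⟨hn.trans hs.1, hs.2⟩)

theorem frequently_atTop_forall_mem {κ : Type*} [Countable κ] {C : κ → Set R}
    (hclosed : ∀ k, IsClosed (C k)) (hfreq : ∀ k, ∃ᶠ α in atTop, α ∈ C k) :
    ∃ᶠ α in atTop, ∀ k, α ∈ C k := by
  by_contra hcon
  have hmiss : ∀ᶠ α in atTop, ∃ k, ∀ᶠ s in 𝓝[≤] α, s ∉ C k := by
    filter_upwards [not_frequently.1 hcon] with α hα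
    obtain ⟨k, hk⟩ := not_forall.1 hα
    exact ⟨k, mem_nhdsWithin_of_mem_nhds ((hclosed k).isOpen_compl.mem_nhds hk)⟩
  obtain ⟨k, γ, hγ⟩ := exists_frequently_forall_Ioc hmiss
  obtain ⟨s, hsC, hγs⟩ := ((hfreq k).and_eventually (eventually_gt_atTop γ)).exists
  obtain ⟨α, hα, hsα⟩ := (hγ.and_eventually (eventually_ge_atTop s)).exists
  exact hα s ⟨hγs, hsα⟩ hsC

theorem exists_eventually_eq_of_continuousOn_Ici {X : Type*} [MetricSpace X] {g : R → X} {γ : R}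
    (hg : ContinuousOn g (Ici γ)) : ∃ x, ∀ᶠ s in atTop, g s = x := by
  have hosc (n : ℕ) : ∀ᶠ s in atTop, ∀ t ≥ s, dist (g t) (g s) < 2 * (1 / ((n : ℝ) + 1)) := by
    have hnear : ∀ᶠ α in atTop, ∃ _ : Unit, ∀ᶠ s in 𝓝[≤] α,
        dist (g s) (g α) < 1 / ((n : ℝ) + 1) := by
      filter_upwards [eventually_gt_atTop γ] with α hα
      exact ⟨(), mem_nhdsWithin_of_mem_nhds <|
        (hg.continuousAt (Ici_mem_nhds hα)).eventually (Metric.ball_mem_nhds _ (by positivity))⟩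
    obtain ⟨-, γ', hγ'⟩ := exists_frequently_forall_Ioc hnear
    filter_upwards [eventually_gt_atTop γ'] with s hs t hst
    obtain ⟨α, hα, htα⟩ := (hγ'.and_eventually (eventually_ge_atTop t)).exists
    linarith [dist_triangle_right (g t) (g s) (g α), hα s ⟨hs, hst.trans htα⟩,
      hα t ⟨hs.trans_le hst, htα⟩]
  have : Nonempty R := ⟨γ⟩
  obtain ⟨s, hs⟩ := (eventually_countable_forall.2 hosc).exists
  refine ⟨g s, (eventually_ge_atTop s).mono fun t hst => eq_of_forall_dist_le fun ε hε => ?_⟩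
  obtain ⟨n, hn⟩ := exists_nat_one_div_lt (half_pos hε)
  linarith [hs n t hst]

end LongOrder

section CurveGerm

variable {X Y : Type*} [ConditionallyCompleteLinearOrder X] [DenselyOrdered X] [NoMinOrder X]
  [NoMaxOrder X] [TopologicalSpace X] [OrderTopology X] [LinearOrder Y] [TopologicalSpace Y]
  [OrderTopology Y] {U : Set X} {t : X}

theorem image_mem_nhds_of_continuousOn_of_injOn {f : X → Y} (hU : U ∈ 𝓝 t)
    (hf : ContinuousOn f U) (hinj : InjOn f U) : f '' U ∈ 𝓝 (f t) := by
  obtain ⟨c, d, hcd, hIcc_mem, hIccU⟩ := exists_Icc_mem_subset_of_mem_nhds hU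
  have ht : t ∈ Ioo c d := Icc_mem_nhds_iff.1 hIcc_mem
  have hle : c ≤ d := (ht.1.trans ht.2).le
  have hc : c ∈ Icc c d := left_mem_Icc.2 hle
  have hd : d ∈ Icc c d := right_mem_Icc.2 hle
  have hf' := hf.mono hIccU
  refine mem_of_superset ?_ (image_mono hIccU)
  rcases hf'.strictMonoOn_of_injOn_Icc' hle (hinj.mono hIccU) with hmono | hanti
  · exact mem_of_superset (Icc_mem_nhds (hmono hc hcd ht.1) (hmono hcd hd ht.2))
      (intermediate_value_Icc hle hf')
  · exact mem_of_superset (Icc_mem_nhds (hanti hcd hd ht.2) (hanti hc hcd ht.1))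
      (intermediate_value_Icc' hle hf')

theorem eventually_mem_image_of_snd_eq {Z N : Type*} [TopologicalSpace Z] [TopologicalSpace N]
    (φ : OpenPartialHomeomorph N (Y × Z)) {g : X → N} (hU : U ∈ 𝓝 t) (hg : ContinuousOn g U)
    (hinj : InjOn g U) (hsource : g t ∈ φ.source)
    (hsnd : ∀ᶠ s in 𝓝 t, (φ (g s)).2 = (φ (g t)).2) :
    ∀ᶠ w in 𝓝 (g t), (φ w).2 = (φ (g t)).2 → w ∈ g '' U := by
  let V : Set X := U ∩ {s | g s ∈ φ.source ∧ (φ (g s)).2 = (φ (g t)).2}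
  have hV : V ∈ 𝓝 t := inter_mem hU <|
    ((hg.continuousAt hU).eventually (φ.open_source.mem_nhds hsource)).and hsnd
  have hf : ContinuousOn (fun s => (φ (g s)).1) V :=
    continuous_fst.comp_continuousOn <|
      φ.continuousOn.comp (hg.mono inter_subset_left) fun s hs => hs.2.1
  have hf_inj : InjOn (fun s => (φ (g s)).1) V := fun s hs s' hs' h =>
    hinj hs.1 hs'.1 <| φ.injOn hs.2.1 hs'.2.1 <| Prod.ext h (hs.2.2.trans hs'.2.2.symm)
  have hfst : ContinuousAt (fun w => (φ w).1) (g t) := (φ.continuousAt hsource).fst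
  have himage := image_mem_nhds_of_continuousOn_of_injOn hV hf hf_inj
  filter_upwards [φ.open_source.mem_nhds hsource, hfst.preimage_mem_nhds himage]
    with w hw ⟨s, hs, hsw⟩ hw_snd
  exact ⟨s, hs.1, φ.injOn hs.2.1 hw (Prod.ext hsw (hs.2.2.trans hw_snd.symm))⟩

end CurveGerm

theorem continuousOn_comp_of_isCompact_of_factors {A K Y Z : Type*} [TopologicalSpace A]
    [TopologicalSpace K] [TopologicalSpace Y] [T2Space Y] [TopologicalSpace Z] {S : Set K}
    (hS : IsCompact S) {f : K → Y} {g : K → Z} (hf : ContinuousOn f S) (hg : ContinuousOn g S)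
    (hfg : ∀ p ∈ S, ∀ q ∈ S, f p = f q → g p = g q) {ξ : A → K} {B : Set A} (hξ : MapsTo ξ B S)
    (hfξ : ContinuousOn (f ∘ ξ) B) : ContinuousOn (g ∘ ξ) B := by
  refine continuousOn_iff_isClosed.2 fun T hT => ?_
  obtain ⟨V, hV, hSV⟩ := continuousOn_iff_isClosed.1 hg T hT
  have hcompact : IsCompact (g ⁻¹' T ∩ S) := by
    rw [hSV, inter_comm]
    exact hS.inter_right hV
  have hclosed : IsClosed (f '' (g ⁻¹' T ∩ S)) :=
    (hcompact.image_of_continuousOn (hf.mono inter_subset_right)).isClosed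
  obtain ⟨W, hW, hBW⟩ := continuousOn_iff_isClosed.1 hfξ _ hclosed
  refine ⟨W, hW, hBW ▸ ?_⟩
  ext a
  refine and_congr_left fun ha => ⟨fun hT => ⟨ξ a, ⟨hT, hξ ha⟩, rfl⟩, ?_⟩
  rintro ⟨p, ⟨hpT, hpS⟩, hpa⟩
  exact show g (ξ a) ∈ T from hfg p hpS (ξ a) (hξ ha) hpa ▸ hpT

section RationalPoints

variable {u w : ℝ}

theorem exists_rat_mem_Ioo_map_mem {Z : Type*} [TopologicalSpace Z] {f : ℝ → Z} (huw : u < w)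
    (hf : ContinuousOn f (Icc u w)) {O : Set Z} (hO : IsOpen O)
    (hmeet : ∃ x ∈ Icc u w, f x ∈ O) : ∃ q : ℚ, (q : ℝ) ∈ Ioo u w ∧ f q ∈ O := by
  obtain ⟨x, hx, hxO⟩ := hmeet
  obtain ⟨V, hV, hOV⟩ := continuousOn_iff'.1 hf O hO
  have hxV : x ∈ V := (hOV.subset ⟨hxO, hx⟩).1
  rw [← closure_Ioo huw.ne] at hx
  obtain ⟨q, hqV, hq⟩ := Rat.denseRange_cast.exists_mem_open (hV.inter isOpen_Ioo)
    (mem_closure_iff.1 hx V hV hxV)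
  exact ⟨q, hq, (hOV.superset ⟨hqV, Ioo_subset_Icc_self hq⟩).1⟩

theorem exists_rat_separated_of_ne {f : ℝ → ℝ} (hf : ContinuousOn f (Icc u w)) {x y : ℝ}
    (hx : x ∈ Icc u w) (hy : y ∈ Icc u w) (hxy : f x ≠ f y) :
    ∃ q₀ q₁ q₂ c d : ℚ, ((q₀ : ℝ) ∈ Ioo u w ∧ (q₁ : ℝ) ∈ Ioo u w ∧ (q₂ : ℝ) ∈ Ioo u w) ∧
      f q₀ < c ∧ f q₁ ∈ Ioo (c : ℝ) d ∧ d < f q₂ := by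
  wlog hlt : f x < f y generalizing x y
  · exact this hy hx hxy.symm (hxy.lt_or_gt.resolve_left hlt)
  have huw : u < w := by
    by_contra! hwu
    exact hxy (congrArg f (subsingleton_Icc_of_ge hwu hx hy))
  obtain ⟨c, hxc, hcy⟩ := exists_rat_btwn hlt
  obtain ⟨d, hcd, hdy⟩ := exists_rat_btwn hcy
  obtain ⟨z, hcz, hzd⟩ := exists_between hcd
  obtain ⟨v, hv, rfl⟩ := isPreconnected_Icc.intermediate_value hx hy hf
    ⟨(hxc.trans hcz).le, (hzd.trans hdy).le⟩
  obtain ⟨q₀, hq₀, hfq₀⟩ := exists_rat_mem_Ioo_map_mem huw hf isOpen_Iio ⟨x, hx, hxc⟩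
  obtain ⟨q₁, hq₁, hfq₁⟩ := exists_rat_mem_Ioo_map_mem huw hf isOpen_Ioo ⟨v, hv, hcz, hzd⟩
  obtain ⟨q₂, hq₂, hfq₂⟩ := exists_rat_mem_Ioo_map_mem huw hf isOpen_Ioi ⟨y, hy, hdy⟩
  exact ⟨q₀, q₁, q₂, c, d, ⟨hq₀, hq₁, hq₂⟩, hfq₀, hfq₁, hfq₂⟩

end RationalPoints

namespace Foliation

section General

variable {M : Type u} [TopologicalSpace M] {p q : ℕ} {F : Foliation M p q} {x y z : M}

theorem isPreconnected_plaqueFibre (i : F.ι) (v : Fin q → ℝ) :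
    IsPreconnected (F.plaqueFibre i v) := by
  have hrange : F.plaqueFibre i v = range fun t => ((F.chart i).symm (t, v) : M) := by
    ext w
    constructor
    · rintro ⟨hw, rfl⟩
      exact ⟨(F.chart i ⟨w, hw⟩).1, by simp⟩
    · rintro ⟨t, rfl⟩
      exact ⟨((F.chart i).symm (t, v)).2, by simp⟩
  rw [hrange]
  exact isPreconnected_range (by fun_prop)

theorem samePlaque_iff_exists_chart : F.samePlaque x y ↔
    ∃ i, ∃ (hx : x ∈ F.U i) (hy : y ∈ F.U i), (F.chart i ⟨x, hx⟩).2 = (F.chart i ⟨y, hy⟩).2 := by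
  constructor
  · rintro ⟨_, ⟨i, v, z, -, rfl⟩, hx, hy⟩
    obtain ⟨hxU, hxv⟩ := connectedComponentIn_subset _ _ hx
    obtain ⟨hyU, hyv⟩ := connectedComponentIn_subset _ _ hy
    exact ⟨i, hxU, hyU, hxv.trans hyv.symm⟩
  · rintro ⟨i, hx, hy, h⟩
    have hxF : x ∈ F.plaqueFibre i (F.chart i ⟨x, hx⟩).2 := ⟨hx, rfl⟩
    exact ⟨_, ⟨i, _, x, hxF, rfl⟩, mem_connectedComponentIn hxF,
      (isPreconnected_plaqueFibre i _).subset_connectedComponentIn hxF subset_rfl ⟨hy, h.symm⟩⟩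

theorem samePlaque_iff_chart_snd_eq {i : F.ι} (hx : x ∈ F.U i) (hy : y ∈ F.U i) :
    F.samePlaque x y ↔ (F.chart i ⟨x, hx⟩).2 = (F.chart i ⟨y, hy⟩).2 := by
  refine ⟨fun h => ?_, fun h => samePlaque_iff_exists_chart.2 ⟨i, hx, hy, h⟩⟩
  obtain ⟨j, hxj, hyj, hj⟩ := samePlaque_iff_exists_chart.1 h
  exact F.compat j i x y hxj hx hyj hy hj

theorem samePlaque_comm : F.samePlaque x y ↔ F.samePlaque y x := by
  simp only [samePlaque, and_comm]

theorem isLeaf_iff {L : Set M} : F.IsLeaf L ↔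
    L.Nonempty ∧ (∀ x ∈ L, ∀ y ∈ L, F.leafRel x y) ∧ ∀ x ∈ L, ∀ y, F.samePlaque x y → y ∈ L := by
  constructor
  · rintro ⟨x, rfl⟩
    exact ⟨⟨x, .refl x⟩, fun y hy z hz => (Relation.EqvGen.symm _ _ hy).trans _ _ _ hz,
      fun y hy z hyz => Relation.EqvGen.trans _ _ _ hy (.rel _ _ hyz)⟩
  · rintro ⟨⟨x, hx⟩, hrel, hsat⟩
    have hleaf {y z : M} (h : F.leafRel y z) : y ∈ L ↔ z ∈ L := by
      induction h with
      | rel y z h => exact ⟨fun hy => hsat y hy z h, fun hz => hsat z hz y (samePlaque_comm.1 h)⟩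
      | refl => exact .rfl
      | symm _ _ _ ih => exact ih.symm
      | trans _ _ _ _ _ ih ih' => exact ih.trans ih'
    exact ⟨x, ext fun y => ⟨hrel x hx y, fun hy => (hleaf hy).1 hx⟩⟩

theorem IsLeaf.eq_of_mem {L L' : Set M} (hL : F.IsLeaf L) (hL' : F.IsLeaf L') (hx : x ∈ L)
    (hx' : x ∈ L') : L = L' := by
  obtain ⟨⟨y, rfl⟩, z, rfl⟩ := And.intro hL hL'
  have hyz : F.leafRel y z := hx.trans _ _ _ (hx'.symm _ _)
  exact ext fun w => ⟨(hyz.symm _ _).trans _ _ _, hyz.trans _ _ _⟩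

end General

section FlowBox

variable {M : Type u} [TopologicalSpace M] {F : Foliation M 1 1} {i : F.ι} {x y z : M}

/-- The `i`-th chart of a one-dimensional foliation of a surface, as a partial homeomorphism onto
the plane; its second coordinate is the level transverse to the plaques. -/
def flowBox (F : Foliation M 1 1) (i : F.ι) : OpenPartialHomeomorph M (ℝ × ℝ) :=
  have : Nonempty (⟨F.U i, F.isOpen i⟩ : TopologicalSpace.Opens M) := ⟨(F.chart i).symm 0⟩
  let line : (Fin 1 → ℝ) ≃ₜ ℝ := Homeomorph.funUnique (Fin 1) ℝ
  (TopologicalSpace.Opens.openPartialHomeomorphSubtypeCoe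
    ⟨F.U i, F.isOpen i⟩ this).symm.transHomeomorph ((F.chart i).trans (line.prodCongr line))

@[simp]
theorem flowBox_source : (F.flowBox i).source = F.U i := by
  simp [flowBox]

@[simp]
theorem flowBox_target : (F.flowBox i).target = univ := by
  simp [flowBox]

theorem flowBox_snd (hx : x ∈ F.U i) : (F.flowBox i x).2 = (F.chart i ⟨x, hx⟩).2 0 := by
  have hleft := (TopologicalSpace.Opens.openPartialHomeomorphSubtypeCoe ⟨F.U i, F.isOpen i⟩
    ⟨⟨x, hx⟩⟩).left_inv (x := ⟨x, hx⟩) (mem_univ _)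
  exact congrArg (fun w => (F.chart i w).2 0) hleft

theorem samePlaque_iff_flowBox_snd_eq (hx : x ∈ (F.flowBox i).source)
    (hy : y ∈ (F.flowBox i).source) :
    F.samePlaque x y ↔ (F.flowBox i x).2 = (F.flowBox i y).2 := by
  rw [flowBox_source] at hx hy
  rw [samePlaque_iff_chart_snd_eq hx hy, flowBox_snd hx, flowBox_snd hy, funext_iff,
    Fin.forall_fin_one]

theorem samePlaque_trans_of_mem_source (hx : x ∈ (F.flowBox i).source)
    (hy : y ∈ (F.flowBox i).source) (hz : z ∈ (F.flowBox i).source) (hxy : F.samePlaque x y)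
    (hyz : F.samePlaque y z) : F.samePlaque x z := by
  rw [samePlaque_iff_flowBox_snd_eq hx hy] at hxy
  rw [samePlaque_iff_flowBox_snd_eq hy hz] at hyz
  exact (samePlaque_iff_flowBox_snd_eq hx hz).2 (hxy.trans hyz)

theorem exists_mem_flowBox_source (F : Foliation M 1 1) (x : M) : ∃ i, x ∈ (F.flowBox i).source :=
  (F.covers x).imp fun _ h => by rwa [flowBox_source]

theorem samePlaque_of_frequently {T : Type*} [TopologicalSpace T] {f g : T → M} {t : T}
    (hf : ContinuousAt f t) (hg : ContinuousAt g t) (hft : f t ∈ (F.flowBox i).source)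
    (hgt : g t ∈ (F.flowBox i).source) (h : ∃ᶠ z in 𝓝 t, F.samePlaque (f z) (g z)) :
    F.samePlaque (f t) (g t) := by
  rw [samePlaque_iff_flowBox_snd_eq hft hgt]
  by_contra hne
  have hlevel := ((((F.flowBox i).continuousAt hft).comp hf).snd.ne_iff_eventually_ne
    (((F.flowBox i).continuousAt hgt).comp hg).snd).1 hne
  refine h ?_
  filter_upwards [hf.preimage_mem_nhds ((F.flowBox i).open_source.mem_nhds hft),
    hg.preimage_mem_nhds ((F.flowBox i).open_source.mem_nhds hgt),
    hlevel] with z hfz hgz hz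
  rwa [samePlaque_iff_flowBox_snd_eq hfz hgz]

/-- The plaque of the `i`-th chart at level `v`, parametrised by the line. -/
def plaqueCurve (F : Foliation M 1 1) (i : F.ι) (v t : ℝ) : M :=
  (F.flowBox i).symm (t, v)

variable {v t : ℝ}

theorem plaqueCurve_mem_source : F.plaqueCurve i v t ∈ (F.flowBox i).source :=
  (F.flowBox i).map_target (by simp)

theorem flowBox_plaqueCurve : F.flowBox i (F.plaqueCurve i v t) = (t, v) :=
  (F.flowBox i).right_inv (by simp)

theorem plaqueCurve_flowBox (hx : x ∈ (F.flowBox i).source) :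
    F.plaqueCurve i (F.flowBox i x).2 (F.flowBox i x).1 = x :=
  (F.flowBox i).left_inv hx

theorem continuous_plaqueCurve : Continuous (F.plaqueCurve i v) :=
  (F.flowBox i).continuousOn_symm.comp_continuous (by fun_prop) (by simp)

theorem injective_plaqueCurve : Function.Injective (F.plaqueCurve i v) := fun t t' h => by
  simpa only [flowBox_plaqueCurve, Prod.mk.injEq, and_true] using congrArg (F.flowBox i) h

end FlowBox

section Cylinder

variable {S : Type*} [TopologicalSpace S] {R : Type*} [TopologicalSpace R]
  {F : Foliation (S × R) 1 1} {e : ℝ → S} {A : Set ℝ} {θ : ℝ} {α : R}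

/-- The leaves near the horizontal curve `x ↦ (e x, α)` run along this curve. -/
def LocallyHorizontal (F : Foliation (S × R) 1 1) (e : ℝ → S) (α : R) : Prop :=
  ∀ θ, ∀ᶠ x in 𝓝 θ, F.samePlaque (e θ, α) (e x, α)

/-- The piece `e '' A × {α}` of the horizontal curve at height `α` lies in a single plaque, in the
sense that any two of its points have a common plaque. -/
def HorizontalOn (F : Foliation (S × R) 1 1) (e : ℝ → S) (A : Set ℝ) (α : R) : Prop :=
  ∀ x ∈ A, ∀ x' ∈ A, F.samePlaque (e x, α) (e x', α)

theorem LocallyHorizontal.horizontalOn {i : F.ι} (h : F.LocallyHorizontal e α)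
    (hA : IsPreconnected A) (hsource : ∀ x ∈ A, (e x, α) ∈ (F.flowBox i).source) :
    F.HorizontalOn e A α := fun _ hx _ hx' =>
  hA.induction₂ (fun x x' => F.samePlaque (e x, α) (e x', α))
    (fun x _ => mem_nhdsWithin_of_mem_nhds (h x))
    (fun x y z hx hy hz =>
      samePlaque_trans_of_mem_source (hsource x hx) (hsource y hy) (hsource z hz))
    (fun _ _ _ _ => samePlaque_comm.1) hx hx'

theorem exists_Icc_forall_mem_source (F : Foliation (S × R) 1 1) (he : Continuous e) (θ : ℝ)
    (α : R) : ∃ i, ∃ a b : ℚ, θ ∈ Ioo (a : ℝ) b ∧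
      ∀ᶠ s in 𝓝 α, ∀ x ∈ Icc (a : ℝ) b, (e x, s) ∈ (F.flowBox i).source := by
  obtain ⟨i, hi⟩ := F.exists_mem_flowBox_source (e θ, α)
  have hcont : ContinuousAt (fun p : ℝ × R => (e p.1, p.2)) (θ, α) := by fun_prop
  obtain ⟨u, hu, v, hv, huv⟩ := mem_nhds_prod_iff.1 <|
    hcont.preimage_mem_nhds ((F.flowBox i).open_source.mem_nhds hi)
  obtain ⟨c, d, hcd, hcdu⟩ := mem_nhds_iff_exists_Ioo_subset.1 hu
  obtain ⟨a, hca, haθ⟩ := exists_rat_btwn hcd.1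
  obtain ⟨b, hθb, hbd⟩ := exists_rat_btwn hcd.2
  exact ⟨i, a, b, ⟨haθ, hθb⟩, mem_of_superset hv fun s hs x hx =>
    huv (mk_mem_prod (hcdu ⟨hca.trans_le hx.1, hx.2.trans_lt hbd⟩) hs)⟩

theorem exists_rat_eventually_separated_of_not_horizontalOn (he : Continuous e) {i : F.ι} {u w : ℝ}
    (hi : ∀ x ∈ Icc u w, (e x, α) ∈ (F.flowBox i).source)
    (h : ¬ F.HorizontalOn e (Icc u w) α) :
    ∃ q₀ q₁ q₂ c d : ℚ, ∀ᶠ s in 𝓝 α,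
      ((q₀ : ℝ) ∈ Ioo u w ∧ (q₁ : ℝ) ∈ Ioo u w ∧ (q₂ : ℝ) ∈ Ioo u w) ∧
        (F.flowBox i (e q₀, s)).2 < c ∧ (F.flowBox i (e q₁, s)).2 ∈ Ioo (c : ℝ) d ∧
        d < (F.flowBox i (e q₂, s)).2 := by
  simp only [HorizontalOn, not_forall] at h
  obtain ⟨x, hx, y, hy, hxy⟩ := h
  rw [samePlaque_iff_flowBox_snd_eq (hi x hx) (hi y hy)] at hxy
  have hlevel : ContinuousOn (fun x => (F.flowBox i (e x, α)).2) (Icc u w) :=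
    continuous_snd.comp_continuousOn <| (F.flowBox i).continuousOn.comp (by fun_prop) hi
  obtain ⟨q₀, q₁, q₂, c, d, ⟨hq₀, hq₁, hq₂⟩, h₀, h₁, h₂⟩ :=
    exists_rat_separated_of_ne hlevel hx hy hxy
  have hvert {x : ℝ} (hx : x ∈ Ioo u w) :
      ContinuousAt (fun s => (F.flowBox i (e x, s)).2) α :=
    (((F.flowBox i).continuousAt (hi x (Ioo_subset_Icc_self hx))).comp
      (by fun_prop : ContinuousAt (e x, ·) α)).snd
  refine ⟨q₀, q₁, q₂, c, d, ?_⟩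
  filter_upwards [(hvert hq₀).eventually_lt_const h₀,
    (hvert hq₁).preimage_mem_nhds (isOpen_Ioo.mem_nhds h₁), (hvert hq₂).eventually_const_lt h₂]
    with s h₀ h₁ h₂ using ⟨⟨hq₀, hq₁, hq₂⟩, h₀, h₁, h₂⟩

theorem isClosed_locallyHorizontal (F : Foliation (S × R) 1 1) (he : Continuous e) :
    IsClosed {α | F.LocallyHorizontal e α} := by
  refine isClosed_iff_frequently.2 fun α hα θ => ?_
  obtain ⟨i, a, b, hθ, hbox⟩ := F.exists_Icc_forall_mem_source he θ α
  filter_upwards [Icc_mem_nhds hθ.1 hθ.2] with x hx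
  have hθ' := Ioo_subset_Icc_self hθ
  refine samePlaque_of_frequently (f := fun s => (e θ, s)) (g := fun s => (e x, s)) (i := i)
    (by fun_prop) (by fun_prop) (hbox.self_of_nhds θ hθ') (hbox.self_of_nhds x hx) ?_
  exact (hα.and_eventually hbox).mono fun s ⟨hs, hsbox⟩ =>
    hs.horizontalOn isPreconnected_Icc hsbox θ hθ' x hx

theorem IsLeaf.locallyHorizontal (he : IsLocalHomeomorph e)
    (h : F.IsLeaf {p : S × R | p.2 = α}) : F.LocallyHorizontal e α := by
  obtain ⟨-, -, hsat⟩ := isLeaf_iff.1 h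
  intro θ
  obtain ⟨i, hi⟩ := F.exists_mem_flowBox_source (e θ, α)
  obtain ⟨e', hθ, rfl⟩ := he θ
  let plaque : ℝ → S × R := F.plaqueCurve i (F.flowBox i (e' θ, α)).2
  have hplaque (t : ℝ) : F.samePlaque (e' θ, α) (plaque t) := by
    rw [samePlaque_iff_flowBox_snd_eq hi plaqueCurve_mem_source, flowBox_plaqueCurve]
  have hheight (t : ℝ) : (plaque t).2 = α := hsat _ rfl _ (hplaque t)
  have hstart : plaque (F.flowBox i (e' θ, α)).1 = (e' θ, α) := plaqueCurve_flowBox hi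
  have hnear := eventually_mem_image_of_snd_eq (g := plaque)
    (e'.symm.prod (OpenPartialHomeomorph.refl R)) (t := (F.flowBox i (e' θ, α)).1) univ_mem
    continuous_plaqueCurve.continuousOn injective_plaqueCurve.injOn
    (by simp [hstart, e'.map_source hθ])
    (.of_forall fun t => (hheight t).trans (hheight _).symm)
  rw [hstart] at hnear
  have hcurve : ContinuousAt (fun x => (e' x, α)) θ :=
    (e'.continuousAt hθ).prodMk continuousAt_const
  filter_upwards [hcurve.eventually hnear] with x hx
  obtain ⟨t, -, ht⟩ := hx rfl
  exact ht ▸ hplaque t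

theorem LocallyHorizontal.leafRel (h : F.LocallyHorizontal e α) (θ θ' : ℝ) :
    F.leafRel (e θ, α) (e θ', α) :=
  isPreconnected_univ.induction₂ (fun θ θ' => F.leafRel (e θ, α) (e θ', α))
    (fun θ _ => mem_nhdsWithin_of_mem_nhds ((h θ).mono fun _ => .rel _ _))
    (fun _ _ _ _ _ _ => .trans _ _ _) (fun _ _ _ _ => .symm _ _) (mem_univ θ) (mem_univ θ')

theorem LocallyHorizontal.eventually_snd_eq {i : F.ι} (he : IsLocalHomeomorph e)
    (h : F.LocallyHorizontal e α) (hi : (e θ, α) ∈ (F.flowBox i).source) :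
    ∀ᶠ w in 𝓝 (e θ, α), (F.flowBox i w).2 = (F.flowBox i (e θ, α)).2 → w.2 = α := by
  have hcurve : Continuous fun x => (e x, α) := he.continuous.prodMk continuous_const
  have hlevel : ∀ᶠ x in 𝓝 θ, (F.flowBox i (e x, α)).2 = (F.flowBox i (e θ, α)).2 := by
    filter_upwards [h θ, hcurve.continuousAt.eventually ((F.flowBox i).open_source.mem_nhds hi)]
      with x hx hxi using ((samePlaque_iff_flowBox_snd_eq hi hxi).1 hx).symm
  obtain ⟨e', hθ, rfl⟩ := he θ
  have hinj : InjOn (fun x => (e' x, α)) e'.source := fun x hx x' hx' h =>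
    e'.injOn hx hx' (congrArg Prod.fst h)
  filter_upwards [eventually_mem_image_of_snd_eq (F.flowBox i) (g := fun x => (e' x, α))
    (e'.open_source.mem_nhds hθ) hcurve.continuousOn hinj hi hlevel] with w hw hw_level
  obtain ⟨x, -, rfl⟩ := hw hw_level
  rfl

theorem LocallyHorizontal.snd_eq_of_samePlaque [T1Space R] (he : IsLocalHomeomorph e)
    (hsurj : Function.Surjective e) (h : F.LocallyHorizontal e α) {y : S × R}
    (hy : F.samePlaque (e θ, α) y) : y.2 = α := by
  obtain ⟨i, hθi, hyi, -⟩ := samePlaque_iff_exists_chart.1 hy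
  rw [← flowBox_source] at hθi hyi
  rw [samePlaque_iff_flowBox_snd_eq hθi hyi] at hy
  let plaque : ℝ → S × R := F.plaqueCurve i (F.flowBox i y).2
  have hopen : IsOpen {t | (plaque t).2 = α} := by
    refine isOpen_iff_mem_nhds.2 fun t ht => ?_
    obtain ⟨x, hx⟩ := hsurj (plaque t).1
    have hxt : (e x, α) = plaque t := Prod.ext hx (Eq.symm ht)
    have hxi : (e x, α) ∈ (F.flowBox i).source := hxt.symm ▸ plaqueCurve_mem_source (i := i)
    have hnear := h.eventually_snd_eq he hxi
    rw [hxt] at hnear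
    filter_upwards [continuous_plaqueCurve.continuousAt.eventually hnear] with t' ht'
    exact ht' (by simp only [plaque, flowBox_plaqueCurve])
  have hclopen : IsClopen {t | (plaque t).2 = α} :=
    ⟨isClosed_singleton.preimage continuous_plaqueCurve.snd, hopen⟩
  have hmem : (plaque (F.flowBox i (e θ, α)).1).2 = α := by
    simp only [plaque, ← hy, plaqueCurve_flowBox hθi]
  have hall := hclopen.eq_univ ⟨_, hmem⟩
  have hplaque_y : plaque (F.flowBox i y).1 = y := plaqueCurve_flowBox hyi
  exact hplaque_y ▸ hall.superset (mem_univ (F.flowBox i y).1)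

theorem isLeaf_setOf_snd_eq_iff [T1Space R] (he : IsLocalHomeomorph e)
    (hsurj : Function.Surjective e) :
    F.IsLeaf {p : S × R | p.2 = α} ↔ F.LocallyHorizontal e α := by
  refine ⟨IsLeaf.locallyHorizontal he, fun h => isLeaf_iff.2 ⟨⟨(e 0, α), rfl⟩, ?_, ?_⟩⟩
  · rintro ⟨z, _⟩ rfl ⟨z', _⟩ rfl
    obtain ⟨⟨θ, rfl⟩, θ', rfl⟩ := And.intro (hsurj z) (hsurj z')
    exact h.leafRel θ θ'
  · rintro ⟨z, _⟩ rfl y hy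
    obtain ⟨θ, rfl⟩ := hsurj z
    exact h.snd_eq_of_samePlaque he hsurj hy

end Cylinder

section LongBox

variable {S : Type*} [TopologicalSpace S] {R : Type*} [LinearOrder R] [TopologicalSpace R]
  {F : Foliation (S × R) 1 1} {e : ℝ → S} {a b x : ℝ} {β γ : R}

/-- The ray above height `γ` on the vertical line at angle `θ` lies in a single plaque, in the sense
that any two of its points have a common plaque. -/
def IsVerticalFrom (F : Foliation (S × R) 1 1) (e : ℝ → S) (θ : ℝ) (γ : R) : Prop :=
  ∀ s ≥ γ, ∀ t ≥ γ, F.samePlaque (e θ, s) (e θ, t)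

/-- The angles over which the foliation is ultimately vertical. -/
def verticalAngles (F : Foliation (S × R) 1 1) (e : ℝ → S) : Set ℝ :=
  {θ | ∀ᶠ γ in atTop, F.IsVerticalFrom e θ γ}

/-- Each initial part `[a, b] × [β, α]` of the strip `[a, b] × [β, →)` lies in the domain of a
single chart, which may depend on `α`. -/
def IsLongBox (F : Foliation (S × R) 1 1) (e : ℝ → S) (a b : ℝ) (β : R) : Prop :=
  ∀ α, ∃ i, ∀ x ∈ Icc a b, ∀ s ∈ Icc β α, (e x, s) ∈ (F.flowBox i).source

theorem IsLongBox.isClosed_horizontalOn [ClosedIciTopology R] (hbox : F.IsLongBox e a b β) :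
    IsClosed {α | β ≤ α ∧ F.HorizontalOn e (Icc a b) α} := by
  refine isClosed_iff_frequently.2 fun α hα => ?_
  have hβα : β ≤ α := isClosed_Ici.mem_of_frequently_of_tendsto (hα.mono fun _ h => h.1) tendsto_id
  obtain ⟨i, hi⟩ := hbox α
  exact ⟨hβα, fun x hx x' hx' => samePlaque_of_frequently (f := fun s => (e x, s))
    (g := fun s => (e x', s)) (by fun_prop) (by fun_prop) (hi x hx α ⟨hβα, le_rfl⟩)
    (hi x' hx' α ⟨hβα, le_rfl⟩) (hα.mono fun s hs => hs.2 x hx x' hx')⟩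

theorem IsLongBox.eventually_forall_mem_closure_isVerticalFrom
    [CountableInterFilter (atTop : Filter R)] (he : Continuous e)
    (hbox : F.IsLongBox e a b β) {A : Set ℝ} (hAbox : A ⊆ Icc a b) (hA : A ⊆ F.verticalAngles e) :
    ∀ᶠ γ in atTop, ∀ x ∈ closure A, F.IsVerticalFrom e x γ := by
  obtain ⟨D, hDA, hD, hAD⟩ :=
    (TopologicalSpace.IsSeparable.of_separableSpace A).exists_countable_dense_subset
  have hD_vert : ∀ᶠ γ in atTop, ∀ x ∈ D, F.IsVerticalFrom e x γ :=
    (eventually_countable_ball hD).2 fun x hx => hA (hDA hx)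
  filter_upwards [hD_vert, eventually_ge_atTop β] with γ hγ hβγ x hx s hs t ht
  have hxab : x ∈ Icc a b := closure_minimal hAbox isClosed_Icc hx
  obtain ⟨i, hi⟩ := hbox (max s t)
  refine samePlaque_of_frequently (f := fun z => (e z, s)) (g := fun z => (e z, t))
    (by fun_prop) (by fun_prop) (hi x hxab s ⟨hβγ.trans hs, le_max_left s t⟩)
    (hi x hxab t ⟨hβγ.trans ht, le_max_right s t⟩) ?_
  exact (mem_closure_iff_frequently.1 (closure_minimal hAD isClosed_closure hx)).mono
    fun z hz => hγ z hz s hs t ht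

end LongBox

section LongRay

variable {S : Type*} [TopologicalSpace S] {R : Type*} [ConditionallyCompleteLinearOrder R]
  [TopologicalSpace R] [NoMaxOrder R] [OrderTopology R] {F : Foliation (S × R) 1 1} {e : ℝ → S}
  {a b x : ℝ} {β γ : R}

theorem eventually_not_horizontalOn [DenselyOrdered R] [NoMinOrder R] (he : IsLocalHomeomorph e)
    {A : Set ℝ} (hx : x ∈ F.verticalAngles e) (hxA : x ∈ A) (hacc : ∃ᶠ z in 𝓝[≠] x, z ∈ A) :
    ∀ᶠ α in atTop, ¬ F.HorizontalOn e A α := by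
  have : Nonempty R := ⟨sSup ∅⟩
  obtain ⟨γ, hγ⟩ := hx.exists
  filter_upwards [eventually_gt_atTop γ] with α hα hhor
  obtain ⟨i, hi⟩ := F.exists_mem_flowBox_source (e x, α)
  have hvert : Continuous fun s : R => (e x, s) := by fun_prop
  have hcurve : ContinuousAt (fun z => (e z, α)) x :=
    (he.continuous.prodMk continuous_const).continuousAt
  have hlevel : ∀ᶠ s in 𝓝 α, (F.flowBox i (e x, s)).2 = (F.flowBox i (e x, α)).2 := by
    filter_upwards [Ici_mem_nhds hα,
      hvert.continuousAt.eventually ((F.flowBox i).open_source.mem_nhds hi)] with s hs hsi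
    exact (samePlaque_iff_flowBox_snd_eq hsi hi).1 (hγ s hs α hα.le)
  have hnear := eventually_mem_image_of_snd_eq (F.flowBox i) (g := fun s => (e x, s)) univ_mem
    hvert.continuousOn (Prod.mk_right_injective (e x)).injOn hi hlevel
  have hne : ∀ᶠ z in 𝓝[≠] x, e z ≠ e x := by
    obtain ⟨e', hxe', rfl⟩ := he x
    exact e'.eventually_ne_nhdsWithin hxe'
  obtain ⟨z, ⟨⟨hzA, hz_near⟩, hzi⟩, hz_ne⟩ := (((hacc.and_eventually
    (mem_nhdsWithin_of_mem_nhds (hcurve.eventually hnear))).and_eventually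
    (mem_nhdsWithin_of_mem_nhds
      (hcurve.eventually ((F.flowBox i).open_source.mem_nhds hi)))).and_eventually hne).exists
  obtain ⟨s, -, hs⟩ := hz_near ((samePlaque_iff_flowBox_snd_eq hzi hi).1 (hhor z hzA x hxA))
  exact hz_ne (congrArg Prod.fst hs).symm

theorem IsLongBox.continuousOn_holonomy (he : Continuous e)
    (hbox : F.IsLongBox e a b β) (hβγ : β ≤ γ) {i : F.ι}
    (hi : ∀ y ∈ Icc a b, (e y, γ) ∈ (F.flowBox i).source) (hx : x ∈ Icc a b) {ξ : R → ℝ}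
    (hξ : MapsTo ξ (Ici γ) (Icc a b)) (hsame : ∀ s ≥ γ, F.samePlaque (e (ξ s), γ) (e x, s)) :
    ContinuousOn (fun s => (F.flowBox i (e (ξ s), γ)).2) (Ici γ) := by
  intro s hs
  obtain ⟨α, hsα⟩ := exists_gt s
  obtain ⟨j, hj⟩ := hbox α
  have hγα : γ ≤ α := hs.trans hsα.le
  have hjγ (y) (hy : y ∈ Icc a b) : (e y, γ) ∈ (F.flowBox j).source := hj y hy γ ⟨hβγ, hγα⟩
  have hlevel {k : F.ι} (hk : ∀ y ∈ Icc a b, (e y, γ) ∈ (F.flowBox k).source) :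
      ContinuousOn (fun y => (F.flowBox k (e y, γ)).2) (Icc a b) :=
    continuous_snd.comp_continuousOn <| (F.flowBox k).continuousOn.comp (by fun_prop) hk
  have hvert : ContinuousOn (fun t => (F.flowBox j (e x, t)).2) (Icc γ α) :=
    continuous_snd.comp_continuousOn <| (F.flowBox j).continuousOn.comp (by fun_prop)
      fun t ht => hj x hx t ⟨hβγ.trans ht.1, ht.2⟩
  have htransfer : ContinuousOn (fun t => (F.flowBox j (e (ξ t), γ)).2) (Icc γ α) :=
    hvert.congr fun t ht => (samePlaque_iff_flowBox_snd_eq (hjγ _ (hξ ht.1))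
      (hj x hx t ⟨hβγ.trans ht.1, ht.2⟩)).1 (hsame t ht.1)
  have hIcc := continuousOn_comp_of_isCompact_of_factors isCompact_Icc (hlevel hjγ) (hlevel hi)
    (fun y hy z hz h => (samePlaque_iff_flowBox_snd_eq (hi y hy) (hi z hz)).1 <|
      (samePlaque_iff_flowBox_snd_eq (hjγ y hy) (hjγ z hz)).2 h)
    (hξ.mono_left Icc_subset_Ici_self) htransfer
  exact (hIcc s ⟨hs, hsα.le⟩).mono_of_mem_nhdsWithin <|
    inter_mem self_mem_nhdsWithin (mem_nhdsWithin_of_mem_nhds (Iic_mem_nhds hsα))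

variable [CountableInterFilter (atTop : Filter R)]

theorem exists_isLongBox (F : Foliation (S × R) 1 1) (he : Continuous e) (θ : ℝ) :
    ∃ a b : ℚ, ∃ β, θ ∈ Ioo (a : ℝ) b ∧ F.IsLongBox e a b β := by
  choose i a b hθ hsource using F.exists_Icc_forall_mem_source he θ
  obtain ⟨⟨a, b⟩, γ, hγ⟩ := exists_frequently_forall_Ioc
    (Q := fun (k : ℚ × ℚ) α s => θ ∈ Ioo (k.1 : ℝ) k.2 ∧
      ∀ x ∈ Icc (k.1 : ℝ) k.2, (e x, s) ∈ (F.flowBox (i α)).source)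
    (.of_forall fun α => ⟨(a α, b α), mem_nhdsWithin_of_mem_nhds <|
      (hsource α).mono fun _ hs => ⟨hθ α, hs⟩⟩)
  obtain ⟨β, hγβ⟩ := exists_gt γ
  obtain ⟨α, hα, hβα⟩ := (hγ.and_eventually (eventually_ge_atTop β)).exists
  refine ⟨a, b, β, (hα β ⟨hγβ, hβα⟩).1, fun α' => ?_⟩
  obtain ⟨α, hα, hα'α⟩ := (hγ.and_eventually (eventually_ge_atTop α')).exists
  exact ⟨i α, fun x hx s hs => (hα s ⟨hγβ.trans_le hs.1, hs.2.trans hα'α⟩).2 x hx⟩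

theorem IsLongBox.mem_verticalAngles (he : Continuous e) (hbox : F.IsLongBox e a b β)
    (hβγ : β ≤ γ) (hx : x ∈ Icc a b)
    (h : ∀ s ≥ γ, ∃ y ∈ Icc a b, F.samePlaque (e y, γ) (e x, s)) : x ∈ F.verticalAngles e := by
  choose! ξ hξ hsame using h
  obtain ⟨i, hi⟩ := hbox γ
  replace hi (y) (hy : y ∈ Icc a b) := hi y hy γ ⟨hβγ, le_rfl⟩
  obtain ⟨v, hv⟩ := exists_eventually_eq_of_continuousOn_Ici
    (hbox.continuousOn_holonomy he hβγ hi hx hξ hsame)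
  filter_upwards [eventually_forall_ge_atTop.2 hv, eventually_ge_atTop γ] with δ hδ hγδ s hs t ht
  have hs' := hγδ.trans hs
  have ht' := hγδ.trans ht
  obtain ⟨j, hj⟩ := hbox (max s t)
  have hjγ (y) (hy : y ∈ Icc a b) : (e y, γ) ∈ (F.flowBox j).source :=
    hj y hy γ ⟨hβγ, hs'.trans (le_max_left s t)⟩
  have hjs : (e x, s) ∈ (F.flowBox j).source := hj x hx s ⟨hβγ.trans hs', le_max_left s t⟩
  have hjt : (e x, t) ∈ (F.flowBox j).source := hj x hx t ⟨hβγ.trans ht', le_max_right s t⟩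
  have hξst : F.samePlaque (e (ξ s), γ) (e (ξ t), γ) :=
    (samePlaque_iff_flowBox_snd_eq (hi _ (hξ s hs')) (hi _ (hξ t ht'))).2
      ((hδ s hs).trans (hδ t ht).symm)
  exact samePlaque_trans_of_mem_source hjs (hjγ _ (hξ s hs')) hjt (samePlaque_comm.1 (hsame s hs'))
    (samePlaque_trans_of_mem_source (hjγ _ (hξ s hs')) (hjγ _ (hξ t ht')) hjt hξst (hsame t ht'))

theorem IsLongBox.exists_mem_verticalAngles (he : Continuous e) (hbox : F.IsLongBox e a b β)
    {u w : ℝ} (huw : Icc u w ⊆ Icc a b)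
    (h : ∀ᶠ α in atTop, ¬ F.HorizontalOn e (Icc u w) α) :
    ∃ z ∈ Ioo u w, z ∈ F.verticalAngles e := by
  choose i hi using hbox
  let Separated : ℚ × ℚ × ℚ × ℚ × ℚ → R → R → Prop := fun (q₀, q₁, q₂, c, d) α s =>
    ((q₀ : ℝ) ∈ Ioo u w ∧ (q₁ : ℝ) ∈ Ioo u w ∧ (q₂ : ℝ) ∈ Ioo u w) ∧
      (F.flowBox (i α) (e q₀, s)).2 < c ∧ (F.flowBox (i α) (e q₁, s)).2 ∈ Ioo (c : ℝ) d ∧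
      d < (F.flowBox (i α) (e q₂, s)).2
  have hgerm : ∀ᶠ α in atTop, ∃ k, ∀ᶠ s in 𝓝[≤] α, Separated k α s := by
    filter_upwards [h, eventually_ge_atTop β] with α hα hβα
    obtain ⟨q₀, q₁, q₂, c, d, hq⟩ := exists_rat_eventually_separated_of_not_horizontalOn he
      (fun x hx => hi α x (huw hx) α ⟨hβα, le_rfl⟩) hα
    exact ⟨(q₀, q₁, q₂, c, d), mem_nhdsWithin_of_mem_nhds hq⟩
  obtain ⟨⟨q₀, q₁, q₂, c, d⟩, γ', hγ'⟩ := exists_frequently_forall_Ioc hgerm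
  obtain ⟨γ, hγ⟩ := exists_gt (max γ' β)
  obtain ⟨hγ'γ, hβγ⟩ := max_lt_iff.1 hγ
  obtain ⟨α, hα, hγα⟩ := (hγ'.and_eventually (eventually_ge_atTop γ)).exists
  obtain ⟨⟨hq₀, hq₁, hq₂⟩, -⟩ := hα γ ⟨hγ'γ, hγα⟩
  refine ⟨q₁, hq₁, IsLongBox.mem_verticalAngles he (fun α => ⟨i α, hi α⟩) hβγ.le
    (huw (Ioo_subset_Icc_self hq₁)) fun s hs => ?_⟩
  obtain ⟨α, hα, hsα⟩ := (hγ'.and_eventually (eventually_ge_atTop s)).exists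
  obtain ⟨-, h₀, -, h₂⟩ := hα γ ⟨hγ'γ, hs.trans hsα⟩
  obtain ⟨-, -, h₁, -⟩ := hα s ⟨hγ'γ.trans_le hs, hsα⟩
  have hsource {x t} (hx : x ∈ Icc u w) (ht : t ∈ Icc γ s) :
      (e x, t) ∈ (F.flowBox (i α)).source :=
    hi α x (huw hx) t ⟨hβγ.le.trans ht.1, ht.2.trans hsα⟩
  have hγs : γ ∈ Icc γ s := ⟨le_rfl, hs⟩
  have hlevel : ContinuousOn (fun x => (F.flowBox (i α) (e x, γ)).2) (Icc u w) :=
    continuous_snd.comp_continuousOn <| (F.flowBox (i α)).continuousOn.comp (by fun_prop)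
      fun x hx => hsource hx hγs
  obtain ⟨y, hy, hys⟩ := isPreconnected_Icc.intermediate_value (Ioo_subset_Icc_self hq₀)
    (Ioo_subset_Icc_self hq₂) hlevel ⟨(h₀.trans h₁.1).le, (h₁.2.trans h₂).le⟩
  exact ⟨y, huw hy, (samePlaque_iff_flowBox_snd_eq (hsource hy hγs)
    (hsource (Ioo_subset_Icc_self hq₁) ⟨hs, le_rfl⟩)).2 hys⟩

theorem IsLongBox.subset_verticalAngles [DenselyOrdered R] [NoMinOrder R]
    (he : IsLocalHomeomorph e) (hbox : F.IsLongBox e a b β)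
    (hmeet : (F.verticalAngles e ∩ Icc a b).Nonempty) : Icc a b ⊆ F.verticalAngles e := by
  have hclosed : IsClosed (F.verticalAngles e ∩ Icc a b) := by
    refine isClosed_of_closure_subset fun x hx => ⟨?_, closure_minimal inter_subset_right
      isClosed_Icc hx⟩
    exact (hbox.eventually_forall_mem_closure_isVerticalFrom he.continuous inter_subset_right
      inter_subset_left).mono fun γ hγ => hγ x hx
  intro w hw
  by_contra hw_vert
  obtain ⟨m, ⟨hm, hmab⟩, hmin⟩ := (isCompact_Icc.of_isClosed_subset hclosed
    inter_subset_right).exists_isMinOn hmeet (continuous_id.dist continuous_const).continuousOn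
  have hmw : m ≠ w := fun h => hw_vert (h ▸ hm)
  have hacc : ∃ᶠ z in 𝓝[≠] m, z ∈ uIcc m w := accPt_iff_frequently_nhdsNE.1 <|
    isPreconnected_uIcc.preperfect_of_nontrivial ⟨m, left_mem_uIcc, w, right_mem_uIcc, hmw⟩ m
      left_mem_uIcc
  obtain ⟨z, hz, hz_vert⟩ := hbox.exists_mem_verticalAngles he.continuous
    (uIcc_subset_Icc hmab hw) (eventually_not_horizontalOn he hm left_mem_uIcc hacc)
  have hle : dist m w ≤ dist z w := hmin ⟨hz_vert, uIcc_subset_Icc hmab hw (Ioo_subset_Icc_self hz)⟩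
  rw [Real.dist_eq, Real.dist_eq] at hle
  rcases le_total m w with h | h
  · rw [min_eq_left h, max_eq_right h] at hz
    rw [abs_of_nonpos (by linarith), abs_of_nonpos (by linarith [hz.2])] at hle
    linarith [hz.1]
  · rw [min_eq_right h, max_eq_left h] at hz
    rw [abs_of_nonneg (by linarith), abs_of_nonneg (by linarith [hz.1])] at hle
    linarith [hz.2]

theorem isClopen_verticalAngles [DenselyOrdered R] [NoMinOrder R]
    (F : Foliation (S × R) 1 1) (he : IsLocalHomeomorph e) : IsClopen (F.verticalAngles e) := by
  refine ⟨isOpen_compl_iff.1 (isOpen_iff_mem_nhds.2 fun θ hθ => ?_),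
    isOpen_iff_mem_nhds.2 fun θ hθ => ?_⟩ <;>
    obtain ⟨a, b, β, hab, hbox⟩ := F.exists_isLongBox he.continuous θ <;>
    refine mem_of_superset (Icc_mem_nhds hab.1 hab.2) ?_
  · exact fun x hx hx_vert => hθ <|
      hbox.subset_verticalAngles he ⟨x, hx_vert, hx⟩ (Ioo_subset_Icc_self hab)
  · exact hbox.subset_verticalAngles he ⟨θ, hθ, Ioo_subset_Icc_self hab⟩

theorem exists_forall_isVerticalFrom (he : Continuous e) (h : F.verticalAngles e = univ) :
    ∃ γ, ∀ θ, F.IsVerticalFrom e θ γ := by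
  have : Nonempty R := ⟨sSup ∅⟩
  have hboxes : ∀ᶠ γ in atTop, ∀ k : {k : ℚ × ℚ // ∃ β, F.IsLongBox e k.1 k.2 β},
      ∀ θ ∈ closure (Icc (k.1.1 : ℝ) k.1.2), F.IsVerticalFrom e θ γ :=
    eventually_countable_forall.2 fun ⟨_, _, hbox⟩ =>
      hbox.eventually_forall_mem_closure_isVerticalFrom he subset_rfl (h.symm ▸ subset_univ _)
  obtain ⟨γ, hγ⟩ := hboxes.exists
  refine ⟨γ, fun θ => ?_⟩
  obtain ⟨a, b, β, hθ, hbox⟩ := F.exists_isLongBox he θ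
  exact hγ ⟨(a, b), β, hbox⟩ θ (subset_closure (Ioo_subset_Icc_self hθ))

theorem frequently_locallyHorizontal (he : Continuous e) (h : F.verticalAngles e = ∅) :
    ∃ᶠ α in atTop, F.LocallyHorizontal e α := by
  choose β hβ using fun k : {k : ℚ × ℚ // ∃ β, F.IsLongBox e k.1 k.2 β} => k.2
  have hfreq (k : {k : ℚ × ℚ // ∃ β, F.IsLongBox e k.1 k.2 β}) :
      ∃ᶠ α in atTop, F.HorizontalOn e (Icc (k.1.1 : ℝ) k.1.2) α := by
    by_contra hcon
    obtain ⟨z, -, hz⟩ :=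
      (hβ k).exists_mem_verticalAngles he subset_rfl (not_frequently.1 hcon)
    exact (h ▸ hz : z ∈ (∅ : Set ℝ))
  refine (frequently_atTop_forall_mem (fun k => (hβ k).isClosed_horizontalOn) fun k =>
    ((hfreq k).and_eventually (eventually_ge_atTop (β k))).mono fun _ => And.symm).mono
      fun α hα θ => ?_
  obtain ⟨a, b, β', hθ, hbox⟩ := F.exists_isLongBox he θ
  filter_upwards [Icc_mem_nhds hθ.1 hθ.2] with x hx
  exact (hα ⟨(a, b), β', hbox⟩).2 θ (Ioo_subset_Icc_self hθ) x hx

theorem frequently_locallyHorizontal_or_exists_forall_isVerticalFrom [DenselyOrdered R]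
    [NoMinOrder R] (F : Foliation (S × R) 1 1) (he : IsLocalHomeomorph e) :
    (∃ᶠ α in atTop, F.LocallyHorizontal e α) ∨ ∃ γ, ∀ θ, F.IsVerticalFrom e θ γ :=
  (isClopen_iff.1 (F.isClopen_verticalAngles he)).imp (frequently_locallyHorizontal he.continuous)
    (exists_forall_isVerticalFrom he.continuous)

end LongRay

section Dichotomy

variable {S : Type*} [TopologicalSpace S] {R : Type*} [LinearOrder R] [TopologicalSpace R]
  {F : Foliation (S × R) 1 1}

theorem IsVerticalFrom.exists_isLeaf {e : ℝ → S} {θ : ℝ} {γ : R} (h : F.IsVerticalFrom e θ γ) :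
    ∃ L, F.IsLeaf L ∧ {p : S × R | p.1 = e θ ∧ γ < p.2} ⊆ L := by
  refine ⟨{y | F.leafRel (e θ, γ) y}, ⟨_, rfl⟩, ?_⟩
  rintro ⟨z, s⟩ ⟨rfl, hs⟩
  exact .rel _ _ (h γ le_rfl s hs.le)

theorem IsLeaf.le_of_isLeaf_setOf_snd_eq [NoMaxOrder R] {z : S} {α γ : R} {L : Set (S × R)}
    (hL : F.IsLeaf L) (hsub : {p : S × R | p.1 = z ∧ α < p.2} ⊆ L)
    (hγ : F.IsLeaf {p : S × R | p.2 = γ}) : γ ≤ α := by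
  by_contra! hαγ
  obtain ⟨s, hs⟩ := exists_gt γ
  have heq := hL.eq_of_mem hγ (x := (z, γ)) (hsub ⟨rfl, hαγ⟩) rfl
  have hmem : (z, s) ∈ {p : S × R | p.2 = γ} := heq ▸ hsub ⟨rfl, hαγ.trans hs⟩
  exact hs.ne' hmem

end Dichotomy

end Foliation

theorem statement1_general {S : Type*} [TopologicalSpace S] {R : Type*}
    [ConditionallyCompleteLinearOrder R] [TopologicalSpace R] [OrderTopology R] [DenselyOrdered R]
    [NoMinOrder R] [NoMaxOrder R] [CountableInterFilter (atTop : Filter R)]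
    (F : Foliation (S × R) 1 1) {e : ℝ → S} (he : IsLocalHomeomorph e)
    (hsurj : Function.Surjective e) :
    Xor (IsClosed {α | F.IsLeaf {p : S × R | p.2 = α}} ∧
        ∀ β, ∃ α ∈ {α | F.IsLeaf {p : S × R | p.2 = α}}, β ≤ α)
      (∃ α, ∀ z, ∃ L, F.IsLeaf L ∧ {p : S × R | p.1 = z ∧ α < p.2} ⊆ L) := by
  have : Nonempty R := ⟨sSup ∅⟩
  have hclub_or_vertical := F.frequently_locallyHorizontal_or_exists_forall_isVerticalFrom he
  refine (xor_iff_or_and_not_and _ _).2 ⟨hclub_or_vertical.imp (fun h => ?_) ?_, ?_⟩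
  · simp only [Foliation.isLeaf_setOf_snd_eq_iff he hsurj]
    exact ⟨F.isClosed_locallyHorizontal he.continuous, fun β =>
      (h.and_eventually (eventually_ge_atTop β)).exists⟩
  · rintro ⟨γ, hγ⟩
    refine ⟨γ, fun z => ?_⟩
    obtain ⟨θ, rfl⟩ := hsurj z
    exact (hγ θ).exists_isLeaf
  · rintro ⟨⟨-, hunbounded⟩, α, hα⟩
    obtain ⟨β, hαβ⟩ := exists_gt α
    obtain ⟨γ, hγ, hβγ⟩ := hunbounded β
    obtain ⟨L, hL, hsub⟩ := hα (e 0)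
    exact (hαβ.trans_le hβγ).not_ge (hL.le_of_isLeaf_setOf_snd_eq hsub hγ)

/-- The universal covering `θ ↦ (cos θ, sin θ)` of the unit circle. -/
def circleCovering (θ : ℝ) : Metric.sphere (0 : EuclideanSpace ℝ (Fin 2)) 1 :=
  Complex.orthonormalBasisOneI.repr.toHomeomorph.subtype
    (p := (· ∈ Metric.sphere 0 1)) (q := (· ∈ Metric.sphere 0 1)) (by simp) (Circle.exp θ)

theorem isLocalHomeomorph_circleCovering : IsLocalHomeomorph circleCovering :=
  (Homeomorph.isLocalHomeomorph _).comp isLocalHomeomorph_circleExp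

theorem surjective_circleCovering : Function.Surjective circleCovering :=
  (Homeomorph.surjective _).comp Circle.exp_surjective

/-- A dimension-one foliation on `𝕊¹ × 𝕃₊` satisfies exactly one of:
(i) the set of `α` such that `𝕊¹ × {α}` is a leaf is closed and unbounded in `𝕃₊`;
(ii) the foliation is ultimately vertical. -/
theorem statement1
    (F : Foliation ((Metric.sphere (0 : EuclideanSpace ℝ (Fin 2)) 1) × LongRay) 1 1) :
    Xor'
      (ClubInLongRay {α : LongRay |
        F.IsLeaf {p : (Metric.sphere (0 : EuclideanSpace ℝ (Fin 2)) 1) × LongRay | p.2 = α}})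
      (∃ α : LongRay, ∀ z : Metric.sphere (0 : EuclideanSpace ℝ (Fin 2)) 1,
        ∃ L, F.IsLeaf L ∧
          {p : (Metric.sphere (0 : EuclideanSpace ℝ (Fin 2)) 1) × LongRay |
            p.1 = z ∧ α < p.2} ⊆ L) :=
  let := LongRay.conditionallyCompleteLinearOrder
  statement1_general F isLocalHomeomorph_circleCovering surjective_circleCovering
end
end
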